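/- arXiv:2412.20729 — 4 statements merged into one kernel-verified Lean document; each statement's English description precedes it below -/
import Mathlib

section
/- Let G be a chordal graph with rooted tree representation T, let X be a subtree of T rooted at x, and let Q be a subpath of X with x as an endpoint. Let ℋ be a nonempty family of subgraphs of G such that X has the core capture property for ℋ, and let k = min{κ(H₁ ∪ H₂) : H₁, H₂ ∈ ℋ}. Let Q₀ be a subpath of Q that is minimal (no proper subpath of Q₀ has the property) such that D_Q^X(Q₀) has the core capture property for ℋ. If |V(Q₀)| ≥ 2, then G has k vertices v such that Q₀ ⊆ S(v). -/
open SimpleGraph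

/-- A graph is chordal if every cycle on at least 4 vertices has a chord
(an edge of the graph joining two vertices of the cycle that is not an edge of the cycle). -/
def IsChordal {V : Type} (G : SimpleGraph V) : Prop :=
  ∀ (v : V) (c : G.Walk v v), c.IsCycle → 4 ≤ c.length →
    ∃ a b : V, a ∈ c.support ∧ b ∈ c.support ∧ G.Adj a b ∧ s(a, b) ∉ c.edges

/-- A tree representation of `G` with host tree `T`: each vertex `u` of `G` gets a
nonempty subtree `S u` of `T`, and distinct vertices are adjacent iff their subtrees meet. -/
structure TreeRep {V W : Type} (G : SimpleGraph V) (T : SimpleGraph W) : Type where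
  isTree : T.IsTree
  S : V → Set W
  subtree_connected : ∀ u : V, (T.induce (S u)).Connected
  adj_iff : ∀ u v : V, u ≠ v → (G.Adj u v ↔ (S u ∩ S v).Nonempty)

/-- A tree representation is minimal if no tree representation of `G` has a host tree
with fewer vertices. -/
def TreeRep.IsMinimal {V W : Type} [Fintype W] {G : SimpleGraph V} {T : SimpleGraph W}
    (_R : TreeRep G T) : Prop :=
  ∀ (W' : Type) [Fintype W'] (T' : SimpleGraph W'),
    Nonempty (TreeRep G T') → Fintype.card W ≤ Fintype.card W'

/-- The bag of a host tree vertex `x`. -/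
def TreeRep.bag {V W : Type} {G : SimpleGraph V} {T : SimpleGraph W}
    (R : TreeRep G T) (x : W) : Set V :=
  {u : V | x ∈ R.S u}

/-- In `T` rooted at `r`, the (vertex set of the) subtree rooted at `x`: all vertices `w`
such that the `r`–`w` path contains `x`. -/
def rootedSubtree {W : Type} (T : SimpleGraph W) (r x : W) : Set W :=
  {w : W | ∀ p : T.Walk r w, p.IsPath → x ∈ p.support}

/-- The core of a subgraph `H` of `G`: the union over edges `uv` of `H` of `V(S u ∩ S v)`,
a set of host-tree vertices. -/
def TreeRep.core {V W : Type} {G : SimpleGraph V} {T : SimpleGraph W}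
    (R : TreeRep G T) (H : G.Subgraph) : Set W :=
  {t : W | ∃ u v : V, H.Adj u v ∧ t ∈ R.S u ∧ t ∈ R.S v}

/-- `C` is a connected component of the subgraph of `T` induced on the vertex set `s`. -/
def IsCompOf {W : Type} (T : SimpleGraph W) (s C : Set W) : Prop :=
  C.Nonempty ∧ C ⊆ s ∧ (T.induce C).Connected ∧
    ∀ ⦃a b : W⦄, a ∈ C → b ∈ s → T.Adj a b → b ∈ C

/-- A graph is 2-connected if it has more than 2 vertices and deleting any one vertex
leaves it connected. -/
def TwoConnected {V : Type} (G : SimpleGraph V) : Prop :=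
  2 < Nat.card V ∧ ∀ v : V, (G.induce {v}ᶜ).Connected

/-- `G` is `k`-connected: more than `k` vertices, and deleting fewer than `k` vertices
leaves it connected. -/
def IsKConnectedGraph {V : Type} (G : SimpleGraph V) (k : ℕ) : Prop :=
  k < Nat.card V ∧ ∀ s : Set V, s.Finite → s.ncard < k → (G.induce sᶜ).Connected

/-- The vertex connectivity `κ(G)`: the maximum `k` such that `G` is `k`-connected. -/
noncomputable def vertexConnectivity {V : Type} (G : SimpleGraph V) : ℕ :=
  sSup {k : ℕ | IsKConnectedGraph G k}

/-- `p` is a path of maximum length in `G`. -/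
def IsLongestPath {V : Type} (G : SimpleGraph V) {a b : V} (p : G.Walk a b) : Prop :=
  p.IsPath ∧ ∀ (c d : V) (q : G.Walk c d), q.IsPath → q.length ≤ p.length

/-- `c` is a cycle of maximum length in `G`. -/
def IsLongestCycle {V : Type} (G : SimpleGraph V) {a : V} (c : G.Walk a a) : Prop :=
  c.IsCycle ∧ ∀ (d : V) (q : G.Walk d d), q.IsCycle → q.length ≤ c.length

/-- The longest path transversal number of `G`: the least size of a set of vertices
meeting every longest path. -/
noncomputable def lpt {V : Type} (G : SimpleGraph V) : ℕ :=
  sInf {k : ℕ | ∃ A : Set V, A.Finite ∧ A.ncard = k ∧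
    ∀ (a b : V) (p : G.Walk a b), IsLongestPath G p → ∃ v ∈ A, v ∈ p.support}

/-- The longest cycle transversal number of `G`: the least size of a set of vertices
meeting every longest cycle. -/
noncomputable def lct {V : Type} (G : SimpleGraph V) : ℕ :=
  sInf {k : ℕ | ∃ A : Set V, A.Finite ∧ A.ncard = k ∧
    ∀ (a : V) (c : G.Walk a a), IsLongestCycle G c → ∃ v ∈ A, v ∈ c.support}

/-- `DQX T q X Q0`: the union, over `y ∈ Q0`, of the component of `X − E(Q)` containing
`y` (all vertices joined to some `y ∈ Q0` by a walk inside `X` avoiding the edges of `q`). -/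
def DQX {W : Type} (T : SimpleGraph W) {x z : W} (q : T.Walk x z) (X : Set W)
    (Q0 : Set W) : Set W :=
  {w : W | ∃ y ∈ Q0, ∃ d : (T.deleteEdges {e : Sym2 W | e ∈ q.edges}).Walk y w,
    ∀ a ∈ d.support, a ∈ X}

/-- Cutter can force the Cutter–Chooser game from position `(X, x)` (a subtree `X` of the
host tree, rooted at `x`) to end within `t` rounds: Cutter picks `z ∈ X` and cuts along the
`x`–`z` path `Q` in `X`; either `X = Q` (game over), or for every component `X'` of
`X − V(Q)` (with its root `x'`, the vertex of `X'` adjacent to `Q`) that Chooser may pick,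
Cutter wins within `t - 1` further rounds. -/
def cutterWins {W : Type} (T : SimpleGraph W) : ℕ → Set W → W → Prop
  | 0, _, _ => False
  | t + 1, X, x =>
      ∃ z ∈ X, ∃ p : T.Walk x z, p.IsPath ∧ (∀ w ∈ p.support, w ∈ X) ∧
        (X = {w : W | w ∈ p.support} ∨
          ∀ (X' : Set W) (x' : W), IsCompOf T (X \ {w : W | w ∈ p.support}) X' →
            x' ∈ X' → (∃ u ∈ p.support, T.Adj u x') → cutterWins T t X' x')

/-- `ccg(X, x)`: the number of rounds of the Cutter–Chooser game on the subtree `X` of the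
host tree rooted at `x`, under optimal play. -/
noncomputable def ccgOn {W : Type} (T : SimpleGraph W) (X : Set W) (x : W) : ℕ :=
  sInf {t : ℕ | cutterWins T t X x}

/-- `ccg(T)`: the minimum over roots `r` of `ccg(T, r)`. -/
noncomputable def ccg {W : Type} (T : SimpleGraph W) : ℕ :=
  sInf (Set.range fun r : W => ccgOn T Set.univ r)

/-- A subdivided caterpillar: a tree having a (spine) path containing every vertex of
degree at least 3. -/
def IsSubdividedCaterpillar {W : Type} (T : SimpleGraph W) : Prop :=
  T.IsTree ∧ ∃ (a b : W) (q : T.Walk a b), q.IsPath ∧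
    ∀ v : W, 3 ≤ (T.neighborSet v).ncard → v ∈ q.support

/-- A subdivided star: a tree with at most one vertex of degree at least 3. -/
def IsSubdividedStar {W : Type} (T : SimpleGraph W) : Prop :=
  T.IsTree ∧ ∀ v w : W, 3 ≤ (T.neighborSet v).ncard → 3 ≤ (T.neighborSet w).ncard → v = w

/-- A leaf: a vertex of degree 1. -/
def IsLeaf {W : Type} (T : SimpleGraph W) (v : W) : Prop := (T.neighborSet v).ncard = 1

/-- `mf T`: the maximum over edges `e` of `T` of the minimum number of leaves of `T`
contained in a component of `T − e`. -/
noncomputable def mf {W : Type} (T : SimpleGraph W) : ℕ :=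
  sSup {k : ℕ | ∃ u v : W, T.Adj u v ∧
    k = min {w : W | IsLeaf T w ∧ (T.deleteEdges {s(u, v)}).Reachable u w}.ncard
            {w : W | IsLeaf T w ∧ (T.deleteEdges {s(u, v)}).Reachable v w}.ncard}

/-- In `T` rooted at `r`, `v` is a child of `u`. -/
def IsChildIn {W : Type} (T : SimpleGraph W) (r u v : W) : Prop :=
  T.Adj u v ∧ ∀ p : T.Walk r v, p.IsPath → u ∈ p.support

/-- In `T` rooted at `r`, `u` is childless. -/
def IsChildlessIn {W : Type} (T : SimpleGraph W) (r u : W) : Prop :=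
  ¬ ∃ v : W, IsChildIn T r u v

/-!
Deleting the edges of `Q₀`, a path with ends `y₁` and `y₂`, splits the host tree `T` into the
`y₁`-side, the `y₂`-side and the part strictly between. A subtree meeting both sides contains all of
`Q₀`. By minimality of `Q₀`, some `H i` is not captured once `y₁` is dropped and some `H j` is not
captured once `y₂` is dropped, so `H i ⊔ H j` has no core vertex strictly between `y₁` and `y₂`.
Hence, after removal of the vertices `v` with `Q₀ ⊆ S(v)`, no edge of `H i ⊔ H j` leads from
a vertex whose subtree meets the `y₁`-side to one whose subtree does not. As both kinds of vertices
remain, the removed vertices form a separator, and there are at least `κ(H i ⊔ H j) ≥ k` of them.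
-/

section Walks

variable {W : Type*} {T : SimpleGraph W}

theorem eq_of_isPath_of_isAcyclic (hT : T.IsAcyclic) {a b : W} {p p' : T.Walk a b}
    (hp : p.IsPath) (hp' : p'.IsPath) : p = p' :=
  congrArg Subtype.val ((hT.subsingleton_path a b).elim ⟨p, hp⟩ ⟨p', hp'⟩)

theorem edges_subset_edges_of_isAcyclic (hT : T.IsAcyclic) {a b : W} {p : T.Walk a b}
    (hp : p.IsPath) (p' : T.Walk a b) : p.edges ⊆ p'.edges := by
  classical
  exact eq_of_isPath_of_isAcyclic hT hp p'.bypass_isPath ▸ p'.edges_bypass_subset_edges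

theorem exists_edges_disjoint_of_reachable_deleteEdges {E : Set (Sym2 W)} {a s : W}
    (h : (T.deleteEdges E).Reachable a s) : ∃ p : T.Walk a s, ∀ e ∈ p.edges, e ∉ E := by
  obtain ⟨d⟩ := h
  refine ⟨d.mapLe (deleteEdges_le E), fun e he ↦ ?_⟩
  rw [Walk.edges_mapLe_eq_edges] at he
  have he' := d.edges_subset_edgeSet he
  rw [edgeSet_deleteEdges] at he'
  exact he'.2

theorem edges_subset_edges_of_reachable_deleteEdges (hT : T.IsAcyclic) {a b s t : W}
    {p : T.Walk a b} (hp : p.IsPath) (hs : (T.deleteEdges p.edgeSet).Reachable a s)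
    (ht : (T.deleteEdges p.edgeSet).Reachable b t) (p' : T.Walk s t) : p.edges ⊆ p'.edges := by
  obtain ⟨d, hd⟩ := exists_edges_disjoint_of_reachable_deleteEdges hs
  obtain ⟨d', hd'⟩ := exists_edges_disjoint_of_reachable_deleteEdges ht.symm
  intro e he
  have he' := edges_subset_edges_of_isAcyclic hT hp (d.append (p'.append d')) he
  simp only [Walk.edges_append, List.mem_append] at he'
  rcases he' with hed | hep' | hed'
  · exact absurd he (hd e hed)
  · exact hep'
  · exact absurd he (hd' e hed')

theorem exists_walk_support_subset_of_preconnected_induce {S : Set W}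
    (hS : (T.induce S).Preconnected) {s t : W} (hs : s ∈ S) (ht : t ∈ S) :
    ∃ p : T.Walk s t, ∀ w ∈ p.support, w ∈ S := by
  obtain ⟨p⟩ := hS ⟨s, hs⟩ ⟨t, ht⟩
  refine ⟨p.map (Embedding.induce S).toHom, fun w hw ↦ ?_⟩
  obtain ⟨v, -, rfl⟩ := List.mem_map.1 (Walk.support_map _ p ▸ hw)
  exact v.2

theorem support_subset_of_preconnected_induce (hT : T.IsAcyclic) {S : Set W}
    (hS : (T.induce S).Preconnected) {a b s t : W} {p : T.Walk a b} (hp : p.IsPath)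
    (hnil : ¬ p.Nil) (hs : s ∈ S) (has : (T.deleteEdges p.edgeSet).Reachable a s)
    (ht : t ∈ S) (hbt : (T.deleteEdges p.edgeSet).Reachable b t) :
    ∀ w ∈ p.support, w ∈ S := by
  obtain ⟨p', hp'S⟩ := exists_walk_support_subset_of_preconnected_induce hS hs ht
  intro w hw
  obtain ⟨e, he, hwe⟩ := (Walk.mem_support_iff_exists_mem_edges_of_not_nil hnil).1 hw
  have he' := edges_subset_edges_of_reachable_deleteEdges hT hp has hbt p' he
  exact hp'S w (Walk.mem_support_iff_exists_mem_edges.2 (.inr ⟨e, he', hwe⟩))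

theorem exists_mem_support_reachable_deleteEdges (hT : T.Preconnected) {x z : W}
    (q : T.Walk x z) (t : W) : ∃ g ∈ q.support, (T.deleteEdges q.edgeSet).Reachable g t := by
  by_contra ht
  obtain ⟨p⟩ := hT x t
  obtain ⟨d, -, ⟨g, hgq, hg⟩, hsnd⟩ := p.exists_boundary_dart
    {t | ∃ g ∈ q.support, (T.deleteEdges q.edgeSet).Reachable g t}
    ⟨x, q.start_mem_support, .refl x⟩ ht
  refine hsnd ?_
  by_cases he : s(d.fst, d.snd) ∈ q.edges
  · exact ⟨d.snd, q.snd_mem_support_of_mem_edges he, .refl _⟩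
  · exact ⟨g, hgq, hg.trans (Adj.reachable (deleteEdges_adj.2 ⟨d.adj, he⟩))⟩

theorem reachable_deleteEdges_of_edges_disjoint {a b x z g g' : W} {p : T.Walk a b}
    {p' : T.Walk x z} (h : p'.edges.Disjoint p.edges) (hg : g ∈ p'.support)
    (hg' : g' ∈ p'.support) : (T.deleteEdges p.edgeSet).Reachable g g' := by
  classical
  have reachable_start : ∀ v ∈ p'.support, (T.deleteEdges p.edgeSet).Reachable x v :=
    fun v hv ↦ ⟨(p'.takeUntil v hv).toDeleteEdges p.edgeSet
      fun _ he ↦ h (p'.edges_takeUntil_subset_edges hv he)⟩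
  exact (reachable_start g hg).symm.trans (reachable_start g' hg')

theorem isSubwalk_or_reverse_isSubwalk (hT : T.IsAcyclic) {x z a b : W} {q : T.Walk x z}
    (hq : q.IsPath) {p : T.Walk a b} (hp : p.IsPath) (ha : a ∈ q.support)
    (hb : b ∈ q.support) : p.IsSubwalk q ∨ p.reverse.IsSubwalk q := by
  classical
  rw [← q.take_spec ha, Walk.mem_support_append_iff] at hb
  rcases hb with hb | hb
  · right
    rw [eq_of_isPath_of_isAcyclic hT hp.reverse ((hq.takeUntil ha).dropUntil hb)]
    exact (Walk.isSubwalk_dropUntil _ hb).trans (q.isSubwalk_takeUntil ha)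
  · left
    rw [eq_of_isPath_of_isAcyclic hT hp ((hq.dropUntil ha).takeUntil hb)]
    exact (Walk.isSubwalk_takeUntil _ hb).trans (q.isSubwalk_dropUntil ha)

theorem edgeSet_subset_edgeSet_of_ends_mem_support (hT : T.IsAcyclic) {x z a b : W}
    {q : T.Walk x z} (hq : q.IsPath) {p : T.Walk a b} (hp : p.IsPath) (ha : a ∈ q.support)
    (hb : b ∈ q.support) : p.edgeSet ⊆ q.edgeSet := by
  rcases isSubwalk_or_reverse_isSubwalk hT hq hp ha hb with h | h
  · exact h.edges_subset
  · exact p.edgeSet_reverse ▸ h.edges_subset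

theorem mem_of_mem_support_of_adj_closed {X : Set W} {x : W}
    (hX : ∀ ⦃a b⦄, a ∈ X → a ≠ x → T.Adj a b → b ∈ X) {u v : W} (d : T.Walk u v)
    (hu : u ∈ X) (hx : x ∉ d.support) : ∀ a ∈ d.support, a ∈ X := by
  classical
  intro a ha
  by_contra haX
  obtain ⟨e, he, hfst, hsnd⟩ := (d.takeUntil a ha).exists_boundary_dart X hu haX
  have hfst_mem : e.fst ∈ d.support :=
    d.support_takeUntil_subset_support ha (Walk.dart_fst_mem_support_of_mem_darts _ he)
  exact hsnd (hX hfst (fun h ↦ hx (h ▸ hfst_mem)) e.adj)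

theorem not_support_diff_start_of_minimal {P : Set W → Prop} {a b : W} {p : T.Walk a b}
    (hp : p.IsPath) (hnil : ¬ p.Nil)
    (hmin : ∀ (c d : W) (p' : T.Walk c d), p'.IsPath → (∀ w ∈ p'.support, w ∈ p.support) →
      P {w | w ∈ p'.support} → {w | w ∈ p'.support} = {w | w ∈ p.support}) :
    ¬ P ({w | w ∈ p.support} \ {a}) := by
  cases p with
  | nil => exact absurd Walk.Nil.nil hnil
  | cons h p =>
    obtain ⟨hp, ha⟩ := (Walk.cons_isPath_iff h p).1 hp
    have support_diff : {w | w ∈ (Walk.cons h p).support} \ {a} = {w | w ∈ p.support} := by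
      ext w
      simp only [Walk.support_cons, List.mem_cons, Set.mem_sdiff, Set.mem_ofPred_eq,
        Set.mem_singleton_iff]
      grind
    rw [support_diff]
    intro hP
    have support_eq := hmin _ _ p hp (fun w hw ↦ List.mem_cons_of_mem _ hw) hP
    exact ha (support_eq.ge (Walk.start_mem_support _))

/-- The vertices strictly between the ends of a path `p` in a tree: those separated from both ends
by the edges of `p`, that is, the interior vertices of `p` with everything attached to them. -/
def strictlyBetween {a b : W} (p : T.Walk a b) : Set W :=
  {t | ¬ (T.deleteEdges p.edgeSet).Reachable a t ∧ ¬ (T.deleteEdges p.edgeSet).Reachable b t}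

theorem strictlyBetween_reverse {a b : W} (p : T.Walk a b) :
    strictlyBetween p.reverse = strictlyBetween p := by
  simp only [strictlyBetween, Walk.edgeSet_reverse, and_comm]

theorem mem_strictlyBetween_congr {a b s t : W} {p : T.Walk a b}
    (h : (T.deleteEdges p.edgeSet).Reachable s t) :
    s ∈ strictlyBetween p ↔ t ∈ strictlyBetween p :=
  and_congr (not_congr ⟨fun hs ↦ hs.trans h, fun ht ↦ ht.trans h.symm⟩)
    (not_congr ⟨fun hs ↦ hs.trans h, fun ht ↦ ht.trans h.symm⟩)

theorem ne_of_mem_strictlyBetween {a b t : W} {p : T.Walk a b} (ht : t ∈ strictlyBetween p) :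
    t ≠ a ∧ t ≠ b :=
  ⟨fun h ↦ ht.1 (by rw [h]), fun h ↦ ht.2 (by rw [h])⟩

theorem reachable_deleteEdges_of_mem_support_left {x z a b g : W} {p₁ : T.Walk x a}
    {p : T.Walk a b} {p₂ : T.Walk b z} (h : ((p₁.append p).append p₂).IsTrail)
    (hg : g ∈ p₁.support) : (T.deleteEdges p.edgeSet).Reachable a g :=
  have disjoint_edges := ((Walk.isTrail_append _ _).1 h.of_append_left).2.2
  reachable_deleteEdges_of_edges_disjoint disjoint_edges p₁.end_mem_support hg

theorem reachable_deleteEdges_of_mem_support_right {x z a b g : W} {p₁ : T.Walk x a}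
    {p : T.Walk a b} {p₂ : T.Walk b z} (h : ((p₁.append p).append p₂).IsTrail)
    (hg : g ∈ p₂.support) : (T.deleteEdges p.edgeSet).Reachable b g := by
  have disjoint_edges := ((Walk.isTrail_append _ _).1 h).2.2
  rw [Walk.edges_append, List.disjoint_append_left] at disjoint_edges
  exact reachable_deleteEdges_of_edges_disjoint disjoint_edges.2.symm p₂.start_mem_support hg

theorem start_notMem_strictlyBetween {x z a b : W} {q : T.Walk x z} (hq : q.IsTrail)
    {p : T.Walk a b} (hpq : p.IsSubwalk q) : x ∉ strictlyBetween p := by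
  obtain ⟨p₁, p₂, rfl⟩ := hpq
  exact fun hx ↦ hx.1 (reachable_deleteEdges_of_mem_support_left hq p₁.start_mem_support)

theorem mem_support_of_mem_strictlyBetween {x z a b g : W} {q : T.Walk x z} (hq : q.IsTrail)
    {p : T.Walk a b} (hpq : p.IsSubwalk q) (hgq : g ∈ q.support)
    (hg : g ∈ strictlyBetween p) : g ∈ p.support := by
  obtain ⟨p₁, p₂, rfl⟩ := hpq
  simp only [Walk.mem_support_append_iff] at hgq
  rcases hgq with (hgp₁ | hgp) | hgp₂
  · exact absurd (reachable_deleteEdges_of_mem_support_left hq hgp₁) hg.1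
  · exact hgp
  · exact absurd (reachable_deleteEdges_of_mem_support_right hq hgp₂) hg.2

end Walks

theorem connected_induce_compl_of_encard_lt_vertexConnectivity {V : Type} {G : SimpleGraph V}
    {s : Set V} (hs : s.encard < vertexConnectivity G) : (G.induce sᶜ).Connected := by
  have hbdd : BddAbove {k | IsKConnectedGraph G k} := ⟨Nat.card V, fun _ hk ↦ hk.1.le⟩
  have hne : {k | IsKConnectedGraph G k}.Nonempty := by
    by_contra hempty
    simp [vertexConnectivity, Set.not_nonempty_iff_eq_empty.1 hempty] at hs
  have hfin : s.Finite := Set.encard_lt_top_iff.1 (hs.trans (ENat.natCast_lt_top _))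
  refine (Nat.sSup_mem hne hbdd).2 s hfin ?_
  rwa [← hfin.cast_ncard_eq, Nat.cast_lt] at hs

section HostTree

variable {V W : Type} {G : SimpleGraph V} {T : SimpleGraph W}

theorem mem_rootedSubtree_of_adj {r x a b : W} (ha : a ∈ rootedSubtree T r x) (hax : a ≠ x)
    (hab : T.Adj a b) : b ∈ rootedSubtree T r x := by
  classical
  intro p hp
  by_cases hap : a ∈ p.support
  · exact p.support_takeUntil_subset_support hap (ha _ (hp.takeUntil hap))
  · have hx := ha (p.concat hab.symm) (hp.concat hap hab.symm)
    rw [Walk.support_concat, List.mem_append, List.mem_singleton] at hx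
    exact hx.resolve_right hax.symm

theorem DQX_mono {x z : W} (q : T.Walk x z) (X : Set W) {Y Y' : Set W} (h : Y ⊆ Y') :
    DQX T q X Y ⊆ DQX T q X Y' :=
  fun _ ⟨y, hy, d, hd⟩ ↦ ⟨y, h hy, d, hd⟩

theorem mem_DQX_of_mem {x z : W} (q : T.Walk x z) {X Y : Set W} {y : W} (hyX : y ∈ X)
    (hy : y ∈ Y) : y ∈ DQX T q X Y :=
  ⟨y, hy, .nil, by simpa using hyX⟩

theorem strictlyBetween_subset_DQX_of_isSubwalk (hT : T.Preconnected) {x z : W}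
    {q : T.Walk x z} (hq : q.IsTrail) {X : Set W} (hqX : ∀ w ∈ q.support, w ∈ X)
    (hX : ∀ ⦃a b⦄, a ∈ X → a ≠ x → T.Adj a b → b ∈ X) {a b : W} {p : T.Walk a b}
    (hpq : p.IsSubwalk q) :
    strictlyBetween p ⊆ DQX T q X ({w | w ∈ p.support} \ {a, b}) := by
  classical
  intro t ht
  obtain ⟨g, hgq, ⟨d⟩⟩ := exists_mem_support_reachable_deleteEdges hT q t
  have deleteEdges_le_deleteEdges : T.deleteEdges q.edgeSet ≤ T.deleteEdges p.edgeSet :=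
    deleteEdges_anti hpq.edges_subset
  have hg : g ∈ strictlyBetween p :=
    (mem_strictlyBetween_congr (Reachable.mono deleteEdges_le_deleteEdges ⟨d⟩)).2 ht
  have start_notMem_d : x ∉ d.support := fun hx ↦
    start_notMem_strictlyBetween hq hpq <| (mem_strictlyBetween_congr
      (Reachable.mono deleteEdges_le_deleteEdges ⟨d.takeUntil x hx⟩)).1 hg
  refine ⟨g, ⟨mem_support_of_mem_strictlyBetween hq hpq hgq hg, ?_⟩, d, ?_⟩
  · simpa using ne_of_mem_strictlyBetween hg
  · exact mem_of_mem_support_of_adj_closed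
      (fun _ _ ha hax hab ↦ hX ha hax (deleteEdges_le _ hab)) d (hqX g hgq) start_notMem_d

theorem strictlyBetween_subset_DQX (hT : T.IsTree) {x z : W} {q : T.Walk x z} (hq : q.IsPath)
    {X : Set W} (hqX : ∀ w ∈ q.support, w ∈ X)
    (hX : ∀ ⦃a b⦄, a ∈ X → a ≠ x → T.Adj a b → b ∈ X) {a b : W} {p : T.Walk a b}
    (hp : p.IsPath) (ha : a ∈ q.support) (hb : b ∈ q.support) :
    strictlyBetween p ⊆ DQX T q X ({w | w ∈ p.support} \ {a, b}) := by
  have hpre := hT.connected.preconnected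
  rcases isSubwalk_or_reverse_isSubwalk hT.isAcyclic hq hp ha hb with h | h
  · exact strictlyBetween_subset_DQX_of_isSubwalk hpre hq.isTrail hqX hX h
  · simpa [strictlyBetween_reverse, Set.pair_comm] using
      strictlyBetween_subset_DQX_of_isSubwalk hpre hq.isTrail hqX hX h

namespace TreeRep

variable (R : TreeRep G T)

/-- The core capture property of `Y` for the family `H`: the core of every member meets `Y`. -/
def CapturesCores {ι : Type*} (H : ι → G.Subgraph) (Y : Set W) : Prop :=
  ∀ i, (R.core (H i) ∩ Y).Nonempty

theorem core_sup (H H' : G.Subgraph) : R.core (H ⊔ H') = R.core H ∪ R.core H' := by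
  ext t
  simp only [core, Subgraph.sup_adj, Set.mem_union, Set.mem_ofPred_eq]
  grind

theorem exists_disjoint_core_of_minimal {ι : Type*} {H : ι → G.Subgraph} {D : Set W → Set W}
    {a b : W} {p : T.Walk a b} (hp : p.IsPath) (hnil : ¬ p.Nil)
    (hmin : ∀ (c d : W) (p' : T.Walk c d), p'.IsPath → (∀ w ∈ p'.support, w ∈ p.support) →
      R.CapturesCores H (D {w | w ∈ p'.support}) → {w | w ∈ p'.support} = {w | w ∈ p.support}) :
    ∃ i, Disjoint (R.core (H i)) (D ({w | w ∈ p.support} \ {a})) := by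
  have not_captures : ¬ R.CapturesCores H (D ({w | w ∈ p.support} \ {a})) :=
    not_support_diff_start_of_minimal (P := fun Y ↦ R.CapturesCores H (D Y)) hp hnil hmin
  simpa only [CapturesCores, not_forall, Set.not_nonempty_iff_eq_empty,
    ← Set.disjoint_iff_inter_eq_empty] using not_captures

theorem exists_mem_verts_notMem_of_disjoint_core {H : G.Subgraph} {x z : W} {q : T.Walk x z}
    {X Y : Set W} {y y' : W} (hcap : (R.core H ∩ DQX T q X Y).Nonempty)
    (hdisj : Disjoint (R.core H) (DQX T q X (Y \ {y}))) (hy' : y' ∈ Y) (hne : y' ≠ y)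
    (hy'X : y' ∈ X) {E : Set (Sym2 W)} (hE : E ⊆ q.edgeSet) :
    ∃ u ∈ H.verts, y' ∉ R.S u ∧ ∃ t ∈ R.S u, (T.deleteEdges E).Reachable y t := by
  obtain ⟨t, ht, g, hg, d, hd⟩ := hcap
  have hgy : g = y := by
    by_contra hgy
    exact Set.disjoint_left.1 hdisj ht ⟨g, ⟨hg, hgy⟩, d, hd⟩
  subst hgy
  have reachable_t : (T.deleteEdges E).Reachable g t := Reachable.mono (deleteEdges_anti hE) ⟨d⟩
  obtain ⟨u, v, huv, htu, htv⟩ := ht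
  by_cases hu : y' ∈ R.S u
  · have hv : y' ∉ R.S v := fun hv ↦
      Set.disjoint_left.1 hdisj ⟨u, v, huv, hu, hv⟩ (mem_DQX_of_mem q hy'X ⟨hy', hne⟩)
    exact ⟨v, H.edge_vert huv.symm, hv, t, htv, reachable_t⟩
  · exact ⟨u, H.edge_vert huv, hu, t, htu, reachable_t⟩

theorem vertexConnectivity_le_encard {K : G.Subgraph} {a b : W} {p : T.Walk a b}
    (hp : p.IsPath) (hnil : ¬ p.Nil) (hK : Disjoint (R.core K) (strictlyBetween p))
    (ha : ∃ u ∈ K.verts, b ∉ R.S u ∧ ∃ t ∈ R.S u, (T.deleteEdges p.edgeSet).Reachable a t)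
    (hb : ∃ u ∈ K.verts, a ∉ R.S u ∧ ∃ t ∈ R.S u, (T.deleteEdges p.edgeSet).Reachable b t) :
    vertexConnectivity K.coe ≤ {v | ∀ w ∈ p.support, w ∈ R.S v}.encard := by
  by_contra! hlt
  obtain ⟨u, hu, hbu, s, hsu, has⟩ := ha
  obtain ⟨u', hu', hau', t, htu', hbt⟩ := hb
  have span {v : V} {s t : W} (hs : s ∈ R.S v) (has : (T.deleteEdges p.edgeSet).Reachable a s)
      (ht : t ∈ R.S v) (hbt : (T.deleteEdges p.edgeSet).Reachable b t) :
      ∀ w ∈ p.support, w ∈ R.S v :=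
    support_subset_of_preconnected_induce R.isTree.isAcyclic
      (R.subtree_connected v).preconnected hp hnil hs has ht hbt
  let A : Set K.verts := Subtype.val ⁻¹' {v | ∀ w ∈ p.support, w ∈ R.S v}
  have connected_compl : (K.coe.induce Aᶜ).Connected :=
    connected_induce_compl_of_encard_lt_vertexConnectivity
      ((Set.encard_preimage_val_le_encard_right _ _).trans_lt hlt)
  have huA : ⟨u, hu⟩ ∈ Aᶜ := fun h ↦ hbu (h b p.end_mem_support)
  have hu'A : ⟨u', hu'⟩ ∈ Aᶜ := fun h ↦ hau' (h a p.start_mem_support)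
  obtain ⟨c⟩ := connected_compl.preconnected ⟨_, huA⟩ ⟨_, hu'A⟩
  obtain ⟨e, -, ⟨s, hs, has⟩, hsnd⟩ := c.exists_boundary_dart
    {v | ∃ s ∈ R.S v.1.1, (T.deleteEdges p.edgeSet).Reachable a s} ⟨s, hsu, has⟩
    fun ⟨s', hs', has'⟩ ↦ hau' (span hs' has' htu' hbt a p.start_mem_support)
  have hadj : K.Adj e.fst.1.1 e.snd.1.1 := e.adj
  obtain ⟨m, hm, hm'⟩ := (R.adj_iff _ _ hadj.ne).1 hadj.adj_sub
  exact Set.disjoint_left.1 hK ⟨_, _, hadj, hm, hm'⟩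
    ⟨fun ham ↦ hsnd ⟨m, hm', ham⟩, fun hbm ↦ e.fst.2 (span hs has hm hbm)⟩

end TreeRep

theorem spanlongpath_general (R : TreeRep G T) {x z : W} {q : T.Walk x z} (hq : q.IsPath)
    {X : Set W} (hqX : ∀ w ∈ q.support, w ∈ X)
    (hX : ∀ ⦃a b⦄, a ∈ X → a ≠ x → T.Adj a b → b ∈ X) {ι : Type*} {H : ι → G.Subgraph} {k : ℕ}
    (hk : ∀ i j, k ≤ vertexConnectivity (H i ⊔ H j).coe)
    {y₁ y₂ : W} {q₀ : T.Walk y₁ y₂} (hq₀ : q₀.IsPath)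
    (hsub : ∀ w ∈ q₀.support, w ∈ q.support)
    (hcap₀ : R.CapturesCores H (DQX T q X {w | w ∈ q₀.support}))
    (hmin : ∀ (a b : W) (q' : T.Walk a b), q'.IsPath → (∀ w ∈ q'.support, w ∈ q₀.support) →
      R.CapturesCores H (DQX T q X {w | w ∈ q'.support}) →
      {w | w ∈ q'.support} = {w | w ∈ q₀.support})
    (hnil : ¬ q₀.Nil) :
    ∃ A : Set V, A.Finite ∧ A.ncard = k ∧ ∀ v ∈ A, ∀ w ∈ q₀.support, w ∈ R.S v := by
  have hy₁ := hsub y₁ q₀.start_mem_support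
  have hy₂ := hsub y₂ q₀.end_mem_support
  have hne : y₁ ≠ y₂ := fun h ↦ hnil (hq₀.nil_iff_eq.2 h)
  obtain ⟨i, hi⟩ := R.exists_disjoint_core_of_minimal (D := DQX T q X) hq₀ hnil hmin
  obtain ⟨j, hj⟩ : ∃ j, Disjoint (R.core (H j)) (DQX T q X ({w | w ∈ q₀.support} \ {y₂})) := by
    simpa using R.exists_disjoint_core_of_minimal (D := DQX T q X) hq₀.reverse
      (by simpa using hnil) (by simpa using hmin)
  have between_subset := strictlyBetween_subset_DQX R.isTree hq hqX hX hq₀ hy₁ hy₂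
  have core_disjoint : Disjoint (R.core (H i ⊔ H j)) (strictlyBetween q₀) := by
    rw [R.core_sup, Set.disjoint_union_left]
    exact ⟨hi.mono_right (between_subset.trans (DQX_mono q X (by grind))),
      hj.mono_right (between_subset.trans (DQX_mono q X (by grind)))⟩
  have hE := edgeSet_subset_edgeSet_of_ends_mem_support R.isTree.isAcyclic hq hq₀ hy₁ hy₂
  obtain ⟨u₁, hu₁, meets_side₁⟩ := R.exists_mem_verts_notMem_of_disjoint_core (hcap₀ i) hi
    q₀.end_mem_support hne.symm (hqX y₂ hy₂) hE
  obtain ⟨u₂, hu₂, meets_side₂⟩ := R.exists_mem_verts_notMem_of_disjoint_core (hcap₀ j) hj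
    q₀.start_mem_support hne (hqX y₁ hy₁) hE
  have k_le_encard : k ≤ {v | ∀ w ∈ q₀.support, w ∈ R.S v}.encard :=
    (Nat.cast_le.2 (hk i j)).trans <| R.vertexConnectivity_le_encard hq₀ hnil core_disjoint
      ⟨u₁, .inl hu₁, meets_side₁⟩ ⟨u₂, .inr hu₂, meets_side₂⟩
  obtain ⟨A, hA, hAk⟩ := Set.exists_subset_encard_eq k_le_encard
  exact ⟨A, Set.finite_of_encard_eq_coe hAk, by simp [Set.ncard, hAk], fun v hv ↦ hA hv⟩

end HostTree

/-- Let `X` be the subtree of `T` rooted at `x`, `Q = q` a subpath of `X` with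
endpoint `x`, `ℋ = H` a nonempty family of subgraphs for which `X` has the core capture
property, and `k` the minimum connectivity of unions of pairs from the family. If `Q₀ = q₀`
is a minimal subpath of `Q` such that `D_Q^X(Q₀)` has the core capture property for the
family, and `|V(Q₀)| ≥ 2`, then `G` has `k` vertices `v` with `Q₀ ⊆ S(v)`. -/
theorem spanlongpath {V W : Type} (G : SimpleGraph V) (T : SimpleGraph W)
    (hchordal : IsChordal G) (R : TreeRep G T) (r : W)
    (x z : W) (hz : z ∈ rootedSubtree T r x)
    (q : T.Walk x z) (hq : q.IsPath) (hqX : ∀ w ∈ q.support, w ∈ rootedSubtree T r x)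
    {ι : Type} [Nonempty ι] (H : ι → G.Subgraph)
    (hcap : ∀ i : ι, (R.core (H i) ∩ rootedSubtree T r x).Nonempty)
    (k : ℕ)
    (hk : k = sInf {m : ℕ | ∃ i j : ι, m = vertexConnectivity (H i ⊔ H j).coe})
    {y₁ y₂ : W} (q₀ : T.Walk y₁ y₂) (hq₀ : q₀.IsPath)
    (hsub : ∀ w ∈ q₀.support, w ∈ q.support)
    (hcap₀ : ∀ i : ι, (R.core (H i) ∩
      DQX T q (rootedSubtree T r x) {w : W | w ∈ q₀.support}).Nonempty)
    (hmin : ∀ (a b : W) (q' : T.Walk a b), q'.IsPath →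
      (∀ w ∈ q'.support, w ∈ q₀.support) →
      (∀ i : ι, (R.core (H i) ∩
        DQX T q (rootedSubtree T r x) {w : W | w ∈ q'.support}).Nonempty) →
      {w : W | w ∈ q'.support} = {w : W | w ∈ q₀.support})
    (hlen : 2 ≤ q₀.support.length) :
    ∃ A : Set V, A.Finite ∧ A.ncard = k ∧ ∀ v ∈ A, ∀ w ∈ q₀.support, w ∈ R.S v := by
  refine spanlongpath_general R hq hqX (fun _ _ ↦ mem_rootedSubtree_of_adj)
    (fun i j ↦ hk ▸ Nat.sInf_le ⟨i, j, rfl⟩) hq₀ hsub hcap₀ hmin fun hnil ↦ ?_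
  simp [Walk.nil_iff_support_eq.1 hnil] at hlen
end

section
/- Let G be a graph, let W ⊆ V(G) be a pair of vertices, and let ℋ be a family of subgraphs of G, where each H ∈ ℋ is a longest path or a longest cycle of G with V(H) ∩ W = ∅. Call a vertex u an attachment point if u is adjacent to both vertices of W. Let ℛ be a nonempty family of paths in G such that each R ∈ ℛ is disjoint from W and the two endpoints of R are distinct attachment points. If each H ∈ ℋ contains a subpath belonging to ℛ, then each maximum-length path in ℛ intersects every H ∈ ℋ. -/
open SimpleGraph

/-!
Suppose a maximum-length path `M ∈ ℛ` misses `H ∈ ℋ`, and let `R ∈ ℛ` be a subpath of `H` with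
endpoints `x` and `y`. Going from `w₁` to `w₂` through `M` gives a path `D` of length `|M| + 2`
disjoint from `H`, and each of `x`, `y` is adjacent to both ends of `D`. If `H` is a path,
rerouting its `x`–`y` segment through `D` gives a path; if `H` is a cycle, rerouting either of its
two `x`–`y` arcs through `D` gives a cycle. As `H` is longest, the replaced piece has length at
least `|D| + 2 = |M| + 4`. But `R` is at least as long as the segment, respectively the shorter
arc, so `|R| > |M|`, contradicting the choice of `M`.
-/

section Walks

variable {V : Type*} {G : SimpleGraph V} {a b s t x y : V}

theorem isPath_cons_concat {p : G.Walk s t} (hp : p.IsPath) (hxy : x ≠ y) (hx : x ∉ p.support)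
    (hy : y ∉ p.support) (hxs : G.Adj x s) (hty : G.Adj t y) :
    (Walk.cons hxs (p.concat hty)).IsPath := by
  rw [Walk.cons_isPath_iff, Walk.concat_isPath_iff]
  simp [Walk.support_concat, hp, hxy, hx, hy]

theorem isPath_append_cons {p : G.Walk a x} {q : G.Walk y b} (hp : p.IsPath) (hq : q.IsPath)
    (hxy : G.Adj x y) (hpq : p.support.Disjoint q.support) : (p.append (.cons hxy q)).IsPath := by
  rw [Walk.isPath_def, Walk.support_append, Walk.support_cons, List.tail_cons]
  exact hp.support_nodup.append hq.support_nodup hpq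

theorem isCycle_cons_append_cons {p : G.Walk s t} {q : G.Walk y x} (hp : p.IsPath)
    (hq : q.IsPath) (hst : s ≠ t) (hxs : G.Adj x s) (hty : G.Adj t y)
    (hpq : p.support.Disjoint q.support) : (Walk.cons hxs (p.append (.cons hty q))).IsCycle := by
  have hxp : x ∉ p.support := fun hx ↦ hpq hx q.end_mem_support
  have hsq : s ∉ q.support := hpq p.start_mem_support
  rw [Walk.cons_isCycle_iff, Walk.edges_append, Walk.edges_cons, List.mem_append, List.mem_cons]
  refine ⟨isPath_append_cons hp hq hty hpq, ?_⟩
  rintro (hxsp | hxsty | hxsq)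
  · exact hxp (p.fst_mem_support_of_mem_edges hxsp)
  · rcases Sym2.eq_iff.mp hxsty with ⟨rfl, -⟩ | ⟨-, rfl⟩
    · exact hxp p.end_mem_support
    · exact hst rfl
  · exact hsq (q.snd_mem_support_of_mem_edges hxsq)

theorem disjoint_support_take_drop {p : G.Walk a b} (hp : p.IsPath) {i j : ℕ} (hij : i < j)
    (hj : j ≤ p.length) : (p.take i).support.Disjoint (p.drop j).support := by
  intro v hv_take hv_drop
  obtain ⟨k, rfl, -⟩ := Walk.mem_support_iff_exists_getVert.mp hv_take
  obtain ⟨l, hkl, hl⟩ := Walk.mem_support_iff_exists_getVert.mp hv_drop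
  rw [Walk.drop_length] at hl
  rw [Walk.take_getVert, Walk.drop_getVert] at hkl
  have hpos : j + l = min i k :=
    hp.getVert_injOn (show _ ≤ p.length by omega) (show _ ≤ p.length by omega) hkl
  omega

theorem idxOf_support_getVert_le [DecidableEq V] (p : G.Walk a b) (i : ℕ) :
    p.support.idxOf (p.getVert i) ≤ i := by
  induction p generalizing i with
  | nil => simp
  | cons h p ih =>
    cases i with
    | zero => simp
    | succ i =>
      rw [Walk.support_cons, Walk.getVert_cons_succ, List.idxOf_cons]
      grind

theorem idxOf_support_getVert_of_injOn [DecidableEq V] {p : G.Walk a b} {n i : ℕ}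
    (hp : Set.InjOn p.getVert {k | k ≤ n}) (hi : i ≤ n) : p.support.idxOf (p.getVert i) = i :=
  hp ((idxOf_support_getVert_le p i).trans hi) hi
    (p.getVert_support_idxOf (p.getVert_mem_support i))

theorem apply_le_add_length_of_forall_adj {H : G.Subgraph} {f : V → ℕ}
    (hf : ∀ u v, H.Adj u v → f v ≤ f u + 1) (r : G.Walk x y) (hr : r.toSubgraph ≤ H) :
    f y ≤ f x + r.length := by
  induction r with
  | nil => simp
  | @cons u v w huv r ih =>
    have hstep : f v ≤ f u + 1 := hf u v (hr.2 (by simp))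
    have htail : f w ≤ f v + r.length := ih (le_trans (by simp) hr)
    rw [Walk.length_cons]
    omega

theorem apply_le_add_length_of_forall_getVert {p : G.Walk a b} {f : V → ℕ}
    (hf : ∀ i < p.length, f (p.getVert (i + 1)) ≤ f (p.getVert i) + 1 ∧
      f (p.getVert i) ≤ f (p.getVert (i + 1)) + 1)
    (r : G.Walk x y) (hr : r.toSubgraph ≤ p.toSubgraph) : f y ≤ f x + r.length := by
  refine apply_le_add_length_of_forall_adj (fun u v huv ↦ ?_) r hr
  obtain ⟨i, hi, hil⟩ := p.toSubgraph_adj_iff.mp huv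
  rcases Sym2.eq_iff.mp hi with ⟨rfl, rfl⟩ | ⟨rfl, rfl⟩
  exacts [(hf i hil).1, (hf i hil).2]

theorem index_le_add_length_of_isPath {p : G.Walk a b} (hp : p.IsPath) {i j : ℕ} (hi : i ≤ p.length)
    (hj : j ≤ p.length) (r : G.Walk (p.getVert i) (p.getVert j))
    (hr : r.toSubgraph ≤ p.toSubgraph) : j ≤ i + r.length := by
  classical
  have hidx : ∀ k ≤ p.length, p.support.idxOf (p.getVert k) = k := fun k hk ↦
    idxOf_support_getVert_of_injOn hp.getVert_injOn hk
  have hbound := apply_le_add_length_of_forall_getVert (f := fun v ↦ p.support.idxOf v)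
    (fun k hk ↦ by simp only [hidx k hk.le, hidx (k + 1) hk]; omega) r hr
  simpa only [hidx i hi, hidx j hj] using hbound

theorem min_arc_le_length_of_isCycle {c : G.Walk a a} (hc : c.IsCycle) {k : ℕ} (hk : k ≤ c.length)
    (r : G.Walk a (c.getVert k)) (hr : r.toSubgraph ≤ c.toSubgraph) :
    min k (c.length - k) ≤ r.length := by
  classical
  -- `f` is the distance from `a` around the cycle, so it changes by at most one along each edge.
  set f : V → ℕ := fun v ↦ min (c.support.idxOf v) (c.length - c.support.idxOf v) with hf
  have hidx_start : c.support.idxOf a = 0 := by simpa using idxOf_support_getVert_le c 0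
  have hf_start : f a = 0 := by simp [hf, hidx_start]
  have hf_getVert : ∀ i ≤ c.length, f (c.getVert i) = min i (c.length - i) := by
    intro i hi
    rcases hi.lt_or_eq with hlt | rfl
    · simp only [hf, idxOf_support_getVert_of_injOn hc.getVert_injOn' (Nat.le_sub_one_of_lt hlt)]
    · simp [hf_start]
  have hbound := apply_le_add_length_of_forall_getVert (f := f)
    (fun i hi ↦ by rw [hf_getVert i hi.le, hf_getVert (i + 1) hi]; omega) r hr
  rwa [hf_getVert k hk, hf_start, zero_add] at hbound

end Walks

section Longest

variable {V : Type} {G : SimpleGraph V} {a b s t w₁ w₂ x y : V}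

/-- The attachment points of the pair `{w₁, w₂}`: the vertices adjacent to both `w₁` and `w₂`. -/
def IsAttachmentPoint (G : SimpleGraph V) (w₁ w₂ u : V) : Prop :=
  G.Adj u w₁ ∧ G.Adj u w₂

theorem IsLongestPath.index_add_detour_length_add_two_le {p : G.Walk a b} (hp : IsLongestPath G p)
    {d : G.Walk s t} (hd : d.IsPath) (hpd : p.support.Disjoint d.support) {i j : ℕ} (hij : i < j)
    (hj : j ≤ p.length) (hs : G.Adj (p.getVert i) s) (ht : G.Adj t (p.getVert j)) :
    i + d.length + 2 ≤ j := by
  have htake_d : (p.take i).support.Disjoint d.support :=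
    List.disjoint_of_subset_left (p.isSubwalk_take i).support_subset hpd
  have hd_drop : d.support.Disjoint (p.drop j).support :=
    (List.disjoint_of_subset_left (p.isSubwalk_drop j).support_subset hpd).symm
  have htake_drop := disjoint_support_take_drop hp.1 hij hj
  have hrerouted : ((p.take i).append (.cons hs (d.append (.cons ht (p.drop j))))).IsPath := by
    refine isPath_append_cons (hp.1.take i) (isPath_append_cons hd (hp.1.drop j) ht hd_drop) hs ?_
    rw [Walk.support_append, Walk.support_cons, List.tail_cons, List.disjoint_append_right]
    exact ⟨htake_d, htake_drop⟩
  have hlength := hp.2 _ _ _ hrerouted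
  simp only [Walk.length_append, Walk.length_cons, Walk.take_length, Walk.drop_length] at hlength
  omega

theorem IsLongestPath.detour_length_add_two_le {p : G.Walk a b} (hp : IsLongestPath G p)
    {d : G.Walk w₁ w₂} (hd : d.IsPath) (hpd : p.support.Disjoint d.support)
    (hx : IsAttachmentPoint G w₁ w₂ x) (hy : IsAttachmentPoint G w₁ w₂ y) (hxy : x ≠ y)
    (r : G.Walk x y) (hr : r.toSubgraph ≤ p.toSubgraph) : d.length + 2 ≤ r.length := by
  have hxp : x ∈ p.support := p.mem_verts_toSubgraph.mp (hr.1 r.start_mem_verts_toSubgraph)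
  have hyp : y ∈ p.support := p.mem_verts_toSubgraph.mp (hr.1 r.end_mem_verts_toSubgraph)
  obtain ⟨i, rfl, hi⟩ := Walk.mem_support_iff_exists_getVert.mp hxp
  obtain ⟨j, rfl, hj⟩ := Walk.mem_support_iff_exists_getVert.mp hyp
  rcases lt_or_gt_of_ne (ne_of_apply_ne p.getVert hxy) with hij | hji
  · have hsegment := index_le_add_length_of_isPath hp.1 hi hj r hr
    have hreroute := hp.index_add_detour_length_add_two_le hd hpd hij hj hx.1 hy.2.symm
    omega
  · have hsegment := index_le_add_length_of_isPath hp.1 hj hi r.reverse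
      (by rwa [Walk.toSubgraph_reverse])
    have hreroute := hp.index_add_detour_length_add_two_le hd hpd hji hi hy.1 hx.2.symm
    rw [Walk.length_reverse] at hsegment
    omega

theorem IsLongestCycle.detour_length_add_two_add_arc_length_le {c : G.Walk a a}
    (hc : IsLongestCycle G c) {d : G.Walk s t} (hd : d.IsPath) (hst : s ≠ t)
    (hcd : c.support.Disjoint d.support) {q : G.Walk y x} (hq : q.IsPath)
    (hqc : q.support ⊆ c.support) (hs : G.Adj x s) (ht : G.Adj t y) :
    d.length + 2 + q.length ≤ c.length := by
  have hdq : d.support.Disjoint q.support := (List.disjoint_of_subset_left hqc hcd).symm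
  have hlength := hc.2 _ _ (isCycle_cons_append_cons hd hq hst hs ht hdq)
  simp only [Walk.length_append, Walk.length_cons] at hlength
  omega

theorem IsLongestCycle.rotate [DecidableEq V] {c : G.Walk a a} (hc : IsLongestCycle G c)
    (hx : x ∈ c.support) : IsLongestCycle G (c.rotate x hx) :=
  ⟨hc.1.rotate hx, fun v q hq ↦ by simpa only [Walk.length_rotate] using hc.2 v q hq⟩

theorem IsLongestCycle.detour_length_add_two_le_of_start {c : G.Walk x x} (hc : IsLongestCycle G c)
    {d : G.Walk w₁ w₂} (hd : d.IsPath) (hw : w₁ ≠ w₂) (hcd : c.support.Disjoint d.support)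
    (hx : IsAttachmentPoint G w₁ w₂ x) (hy : IsAttachmentPoint G w₁ w₂ y) (hxy : x ≠ y)
    (r : G.Walk x y) (hr : r.toSubgraph ≤ c.toSubgraph) : d.length + 2 ≤ r.length := by
  have hyc : y ∈ c.support := c.mem_verts_toSubgraph.mp (hr.1 r.end_mem_verts_toSubgraph)
  obtain ⟨k, rfl, hk⟩ := Walk.mem_support_iff_exists_getVert.mp hyc
  have hk_pos : 0 < k := Nat.pos_of_ne_zero fun hk₀ ↦ hxy (by simp [hk₀])
  have hk_lt : k < c.length := hk.lt_of_ne fun hkc ↦ hxy (by simp [hkc])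
  have hdrop := hc.detour_length_add_two_add_arc_length_le hd hw hcd (hc.1.isPath_drop hk_pos)
    (c.isSubwalk_drop k).support_subset hx.1 hy.2.symm
  have htake := hc.detour_length_add_two_add_arc_length_le hd hw hcd (hc.1.isPath_take hk_lt)
    (c.isSubwalk_take k).support_subset hy.1 hx.2.symm
  have harc := min_arc_le_length_of_isCycle hc.1 hk r hr
  rw [Walk.drop_length] at hdrop
  rw [Walk.take_length] at htake
  omega

theorem IsLongestCycle.detour_length_add_two_le {c : G.Walk a a} (hc : IsLongestCycle G c)
    {d : G.Walk w₁ w₂} (hd : d.IsPath) (hw : w₁ ≠ w₂) (hcd : c.support.Disjoint d.support)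
    (hx : IsAttachmentPoint G w₁ w₂ x) (hy : IsAttachmentPoint G w₁ w₂ y) (hxy : x ≠ y)
    (r : G.Walk x y) (hr : r.toSubgraph ≤ c.toSubgraph) : d.length + 2 ≤ r.length := by
  classical
  have hxc : x ∈ c.support := c.mem_verts_toSubgraph.mp (hr.1 r.start_mem_verts_toSubgraph)
  refine (hc.rotate hxc).detour_length_add_two_le_of_start hd hw ?_ hx hy hxy r ?_
  · exact fun v hv ↦ hcd ((c.mem_support_rotate_iff x hxc).mp hv)
  · rwa [Walk.toSubgraph_rotate]

theorem general_two_way_general (hw : w₁ ≠ w₂) {H : G.Subgraph}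
    (hH : (∃ (a b : V) (p : G.Walk a b), IsLongestPath G p ∧ H = p.toSubgraph) ∨
      (∃ (a : V) (c : G.Walk a a), IsLongestCycle G c ∧ H = c.toSubgraph))
    (hw₁H : w₁ ∉ H.verts) (hw₂H : w₂ ∉ H.verts)
    {r : G.Walk x y} (hrH : r.toSubgraph ≤ H) (hxy : x ≠ y)
    (hx : IsAttachmentPoint G w₁ w₂ x) (hy : IsAttachmentPoint G w₁ w₂ y)
    {m : G.Walk s t} (hm : m.IsPath) (hw₁m : w₁ ∉ m.support) (hw₂m : w₂ ∉ m.support)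
    (hs : G.Adj s w₁) (ht : G.Adj t w₂) (hrm : r.length ≤ m.length) :
    ∃ v ∈ m.support, v ∈ H.verts := by
  by_contra! hmH
  set d : G.Walk w₁ w₂ := .cons hs.symm (m.concat ht) with hd_def
  have hd : d.IsPath := isPath_cons_concat hm hw hw₁m hw₂m hs.symm ht
  have hd_length : d.length = m.length + 2 := by simp [hd_def]
  have hHd : ∀ v ∈ H.verts, v ∉ d.support := by
    intro v hvH hvd
    have hv : v = w₁ ∨ v ∈ m.support ∨ v = w₂ := by
      simpa [hd_def, Walk.support_concat] using hvd
    rcases hv with rfl | hvm | rfl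
    exacts [hw₁H hvH, hmH v hvm hvH, hw₂H hvH]
  have hdr : d.length + 2 ≤ r.length := by
    rcases hH with ⟨a, b, p, hp, rfl⟩ | ⟨a, c, hc, rfl⟩
    · have hpd : p.support.Disjoint d.support := fun v hv ↦ hHd v (p.mem_verts_toSubgraph.mpr hv)
      exact hp.detour_length_add_two_le hd hpd hx hy hxy r hrH
    · have hcd : c.support.Disjoint d.support := fun v hv ↦ hHd v (c.mem_verts_toSubgraph.mpr hv)
      exact hc.detour_length_add_two_le hd hw hcd hx hy hxy r hrH
  omega

end Longest

/-- Let `W = {w₁, w₂}` be a pair of glue vertices and `ℋ = H` a family of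
longest paths/longest cycles avoiding `W`. Let `ℛ` be a nonempty family of paths disjoint
from `W` whose endpoints are distinct attachment points (vertices adjacent to both `w₁`
and `w₂`). If each member of `ℋ` contains a subpath in `ℛ`, then each maximum-length
path of `ℛ` intersects every member of `ℋ`. -/
theorem general_two_way {V : Type} (G : SimpleGraph V) (w₁ w₂ : V) (hw : w₁ ≠ w₂)
    {ι : Type} (H : ι → G.Subgraph)
    (hH : ∀ i : ι,
      (∃ (a b : V) (p : G.Walk a b), IsLongestPath G p ∧ H i = p.toSubgraph) ∨
      (∃ (a : V) (c : G.Walk a a), IsLongestCycle G c ∧ H i = c.toSubgraph))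
    (hHW : ∀ i : ι, w₁ ∉ (H i).verts ∧ w₂ ∉ (H i).verts)
    {ρ : Type} [Nonempty ρ] (Ra Rb : ρ → V) (Rw : ∀ j : ρ, G.Walk (Ra j) (Rb j))
    (hRpath : ∀ j : ρ, (Rw j).IsPath)
    (hRW : ∀ j : ρ, w₁ ∉ (Rw j).support ∧ w₂ ∉ (Rw j).support)
    (hRatt : ∀ j : ρ, Ra j ≠ Rb j ∧ G.Adj (Ra j) w₁ ∧ G.Adj (Ra j) w₂ ∧
      G.Adj (Rb j) w₁ ∧ G.Adj (Rb j) w₂)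
    (hsub : ∀ i : ι, ∃ j : ρ, (Rw j).toSubgraph ≤ H i) :
    ∀ j : ρ, (∀ j' : ρ, (Rw j').length ≤ (Rw j).length) →
      ∀ i : ι, ∃ v : V, v ∈ (Rw j).support ∧ v ∈ (H i).verts := by
  intro j hmax i
  obtain ⟨j', hj'⟩ := hsub i
  obtain ⟨hne, hx₁, hx₂, hy₁, hy₂⟩ := hRatt j'
  obtain ⟨-, hs, -, -, ht⟩ := hRatt j
  exact general_two_way_general hw (hH i) (hHW i).1 (hHW i).2 hj' hne ⟨hx₁, hx₂⟩ ⟨hy₁, hy₂⟩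
    (hRpath j) (hRW j).1 (hRW j).2 hs ht (hmax j')
end

section
/- Let G be a 2-connected chordal graph with a minimal rooted tree representation T. Let X be a subtree of T rooted at x, let z ∈ V(X), and let Q be the x–z path in X. Let 𝒞 be a family of longest cycles of G such that X has the core capture property for 𝒞. Then there is a set A ⊆ V(G) with |A| ≤ 4 such that the family 𝒞′ of cycles in 𝒞 that are disjoint from A is either empty, or there is a component X′ of X − V(Q) such that X′ has the core capture property for 𝒞′. -/
open SimpleGraph

/-!
The tree representation localises the cycles at vertices of `q`. Send every host vertex to its
projection on `q`. A longest cycle whose core meets `X` above the vertex `q_k` either has all its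
vertices but one inside a single component `X'` of `X − V(q)`, or it has an arc with both ends in
the bag of `q_k` that is a single edge or runs inside such a component. In the first case every
longest cycle meets `X'`, since two longest cycles of a 2-connected graph share two vertices.

Otherwise choose an interval of `q` of minimal length met by the projections of all the cores. By
minimality, two cycles of the family are separated along it, and since they share two vertices there
are two vertices `w, w'` of `G` in all bags of the interval. Let `p` be a longest local arc over the
interval, with ends `u, v`, and put `A = {u, v, w, w'}`. If a cycle of the family avoids `A` and the
interior of `p`, replacing its local arc by the detour through `w`, `p` and `w'` makes it longer. So
the cycles avoiding `A` meet the interior of `p`, whose subtrees lie in one component of `X − V(q)`.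
-/

section Walks

variable {V : Type*} {G : SimpleGraph V} {a b s t u v w : V}

theorem exists_eq_append_first_mem (p : G.Walk u v) {S : Set V} (hS : ∃ y ∈ p.support, y ∈ S) :
    ∃ h ∈ S, ∃ (p₁ : G.Walk u h) (p₂ : G.Walk h v),
      p = p₁.append p₂ ∧ ∀ y ∈ p₁.support, y ∈ S → y = h := by
  induction p with
  | nil =>
    obtain ⟨y, hy, hyS⟩ := hS
    obtain rfl := Walk.mem_support_nil_iff.1 hy
    exact ⟨y, hyS, .nil, .nil, rfl, by simp⟩
  | @cons u _ _ hadj p ih =>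
    by_cases hu : u ∈ S
    · exact ⟨u, hu, .nil, .cons hadj p, rfl, by simp⟩
    · obtain ⟨h, hh, p₁, p₂, rfl, hfirst⟩ := ih (by simp_all)
      exact ⟨h, hh, .cons hadj p₁, p₂, rfl, by simp_all⟩

theorem exists_eq_append_first_last_mem (p : G.Walk u v) {S : Set V}
    (hS : ∃ y ∈ p.support, y ∈ S) :
    ∃ a ∈ S, ∃ b ∈ S, ∃ (p₁ : G.Walk u a) (m : G.Walk a b) (p₂ : G.Walk b v),
      p = p₁.append (m.append p₂) ∧ (∀ y ∈ p₁.support, y ∈ S → y = a) ∧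
        ∀ y ∈ p₂.support, y ∈ S → y = b := by
  obtain ⟨a, ha, p₁, o, rfl, hfirst⟩ := exists_eq_append_first_mem p hS
  obtain ⟨b, hb, p₂, m, hsplit, hlast⟩ := exists_eq_append_first_mem o.reverse
    ⟨a, Walk.end_mem_support _, ha⟩
  refine ⟨a, ha, b, hb, p₁, m.reverse, p₂.reverse, ?_, hfirst, by simpa using hlast⟩
  rw [← Walk.reverse_append, ← hsplit, Walk.reverse_reverse]

theorem exists_walk_of_connected_induce {S : Set V} (hS : (G.induce S).Connected) (hu : u ∈ S)
    (hv : v ∈ S) : ∃ p : G.Walk u v, ∀ y ∈ p.support, y ∈ S := by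
  obtain ⟨p⟩ := hS.preconnected ⟨u, hu⟩ ⟨v, hv⟩
  refine ⟨p.map (Embedding.induce S).toHom, fun y hy ↦ ?_⟩
  obtain ⟨y', -, rfl⟩ := List.mem_map.1 ((Walk.support_map _ p) ▸ hy)
  exact y'.2

theorem start_notMem_support_tail {p : G.Walk u v} (hp : p.IsPath) : u ∉ p.support.tail := by
  have hnodup := hp.support_nodup
  rw [← p.cons_tail_support] at hnodup
  exact hnodup.notMem

theorem isPath_append_of_inter_eq {p : G.Walk u v} {q : G.Walk v w} (hp : p.IsPath)
    (hq : q.IsPath) (hinter : ∀ y ∈ p.support, y ∈ q.support → y = v) : (p.append q).IsPath := by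
  rw [Walk.isPath_def, Walk.support_append, List.nodup_append']
  refine ⟨hp.support_nodup, hq.support_nodup.tail, fun y hyp hyq ↦ ?_⟩
  obtain rfl := hinter y hyp (List.mem_of_mem_tail hyq)
  exact start_notMem_support_tail hq hyq

theorem isCycle_append_of_inter_eq {p : G.Walk u v} {q : G.Walk v u} (hp : p.IsPath)
    (hq : q.IsPath) (hinter : ∀ y ∈ p.support, y ∈ q.support → y = u ∨ y = v)
    (hlen : 1 < p.length ∨ 1 < q.length) : (p.append q).IsCycle := by
  refine hp.isCycle_append hq (fun y hyp hyq ↦ ?_) hlen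
  rcases hinter y (List.mem_of_mem_tail hyp) (List.mem_of_mem_tail hyq) with rfl | rfl
  · exact start_notMem_support_tail hp hyp
  · exact start_notMem_support_tail hq hyq

theorem eq_of_mem_support_append {p : G.Walk u v} {q : G.Walk v w} (hpq : (p.append q).IsPath)
    {y : V} (hp : y ∈ p.support) (hq : y ∈ q.support) : y = v := by
  by_contra hne
  exact hpq.ne_of_mem_support_of_append hne hp hq rfl

theorem support_eq_of_isPath {p : G.Walk u u} (hp : p.IsPath) : p.support = [u] :=
  Walk.nil_iff_support_eq.1 (Walk.isPath_iff_nil.1 hp)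

theorem eq_or_eq_of_length_eq_one {p : G.Walk u v} (hp : p.length = 1) {y : V}
    (hy : y ∈ p.support) : y = u ∨ y = v := by
  rw [Walk.eq_of_length_le_one (q := (Walk.adj_of_length_eq_one hp).toWalk) hp.le (by simp)] at hy
  simpa using hy

theorem eq_of_mem_of_first_eq_last {S : Set V} {p₁ : G.Walk u a} {m : G.Walk a a}
    {p₂ : G.Walk a v} (hp : (p₁.append (m.append p₂)).IsPath)
    (hfirst : ∀ y ∈ p₁.support, y ∈ S → y = a) (hlast : ∀ y ∈ p₂.support, y ∈ S → y = a) {y : V}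
    (hy : y ∈ (p₁.append (m.append p₂)).support) (hyS : y ∈ S) : y = a := by
  rw [Walk.mem_support_append_iff, Walk.mem_support_append_iff,
    support_eq_of_isPath hp.of_append_right.of_append_left, List.mem_singleton] at hy
  rcases hy with hy | hy | hy
  exacts [hfirst y hy hyS, hy, hlast y hy hyS]

/-- `p` is an `A`–`B` path: it starts in `A`, ends in `B`, and has no other vertex in `A ∪ B`. -/
structure IsSetPath (A B : Set V) (p : G.Walk a b) : Prop where
  isPath : p.IsPath
  start_mem : a ∈ A
  end_mem : b ∈ B
  eq_start : ∀ y ∈ p.support, y ∈ A → y = a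
  eq_end : ∀ y ∈ p.support, y ∈ B → y = b

theorem exists_isSetPath_of_walk {A B : Set V} (p : G.Walk u v) (hu : u ∈ A) (hv : v ∈ B) :
    ∃ (a b : V) (o : G.Walk a b), IsSetPath A B o ∧ o.support ⊆ p.support := by
  classical
  obtain ⟨b, hb, p₁, p₂, hp, hB⟩ := exists_eq_append_first_mem p ⟨v, p.end_mem_support, hv⟩
  obtain ⟨a, ha, r₁, r₂, hr, hA⟩ := exists_eq_append_first_mem p₁.bypass.reverse
    ⟨u, Walk.end_mem_support _, hu⟩
  have hr₁ : r₁.IsPath := (hr ▸ p₁.bypass_isPath.reverse).of_append_left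
  have hsub : r₁.support ⊆ p₁.support := fun y hy ↦
    p₁.support_bypass_subset_support <| by
      rw [← List.mem_reverse, ← Walk.support_reverse, hr]
      exact Walk.support_subset_support_append_left _ _ hy
  refine ⟨a, b, r₁.reverse, ⟨hr₁.reverse, ha, hb, ?_, ?_⟩, ?_⟩
  · simpa using hA
  · simpa using fun y hy ↦ hB y (hsub hy)
  · simpa [hp] using List.Subset.trans hsub (Walk.support_subset_support_append_left p₁ p₂)

/-- `p` and `o` are the two complementary arcs into which the distinct vertices `a` and `b` divide
the cycle `c`, whatever its base point and orientation. Surgery on cycles replaces one of them. -/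
structure IsArcPair (c : G.Walk w w) (p : G.Walk a b) (o : G.Walk b a) : Prop where
  ne : a ≠ b
  isPath_left : p.IsPath
  isPath_right : o.IsPath
  length_add : p.length + o.length = c.length
  mem_support_iff : ∀ y, y ∈ c.support ↔ y ∈ p.support ∨ y ∈ o.support
  mem_edges_iff : ∀ e, e ∈ c.edges ↔ e ∈ p.edges ∨ e ∈ o.edges
  eq_or_eq : ∀ y ∈ p.support, y ∈ o.support → y = a ∨ y = b

namespace IsArcPair

variable {c : G.Walk w w} {p : G.Walk a b} {o : G.Walk b a}

theorem symm (h : IsArcPair c p o) : IsArcPair c o p where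
  ne := h.ne.symm
  isPath_left := h.isPath_right
  isPath_right := h.isPath_left
  length_add := by rw [add_comm, h.length_add]
  mem_support_iff y := by rw [h.mem_support_iff, or_comm]
  mem_edges_iff e := by rw [h.mem_edges_iff, or_comm]
  eq_or_eq y ho hp := (h.eq_or_eq y hp ho).symm

theorem reverse (h : IsArcPair c p o) : IsArcPair c p.reverse o.reverse where
  ne := h.ne.symm
  isPath_left := h.isPath_left.reverse
  isPath_right := h.isPath_right.reverse
  length_add := by simpa using h.length_add
  mem_support_iff := by simpa using h.mem_support_iff
  mem_edges_iff := by simpa using h.mem_edges_iff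
  eq_or_eq := by simpa [or_comm] using h.eq_or_eq

theorem of_rotate_eq_append [DecidableEq V] (hc : c.IsCycle) {ha : a ∈ c.support}
    (h : c.rotate a ha = p.append o) (hne : a ≠ b) : IsArcPair c p o where
  ne := hne
  isPath_left := (h ▸ hc.rotate ha).isPath_of_append_left (Walk.not_nil_of_ne hne.symm)
  isPath_right := (h ▸ hc.rotate ha).isPath_of_append_right (Walk.not_nil_of_ne hne)
  length_add := by rw [← Walk.length_append, ← h, Walk.length_rotate]
  mem_support_iff y := by
    rw [← c.mem_support_rotate_iff a ha, h, Walk.mem_support_append_iff]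
  mem_edges_iff e := by
    rw [← (c.rotate_edges a ha).mem_iff, h, Walk.edges_append, List.mem_append]
  eq_or_eq y hp ho := by
    have hnodup := (h ▸ hc.rotate ha).support_nodup
    rw [Walk.tail_support_append] at hnodup
    rw [Walk.mem_support_iff] at hp ho
    by_contra! hy
    exact List.disjoint_of_nodup_append hnodup (hp.resolve_left hy.1) (ho.resolve_left hy.2)

theorem shift_start {d : V} {o₁ : G.Walk b d} {o₂ : G.Walk d a} (h : IsArcPair c p (o₁.append o₂))
    (hne : b ≠ d) : IsArcPair c (o₂.append p) o₁ where
  ne := hne.symm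
  isPath_left := by
    refine isPath_append_of_inter_eq h.isPath_right.of_append_right h.isPath_left fun y ho hp ↦ ?_
    rcases h.eq_or_eq y hp (Walk.support_subset_support_append_right _ _ ho) with hy | rfl
    · exact hy
    · exact absurd (eq_of_mem_support_append h.isPath_right o₁.start_mem_support ho) hne
  isPath_right := h.isPath_right.of_append_left
  length_add := by
    rw [← h.length_add, Walk.length_append, Walk.length_append]
    omega
  mem_support_iff y := by
    simp only [h.mem_support_iff, Walk.mem_support_append_iff]
    tauto
  mem_edges_iff e := by
    simp only [h.mem_edges_iff, Walk.edges_append, List.mem_append]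
    tauto
  eq_or_eq y hleft ho := by
    rcases (Walk.mem_support_append_iff _ _).1 hleft with hy | hy
    · exact .inl (eq_of_mem_support_append h.isPath_right ho hy)
    · rcases h.eq_or_eq y hy (Walk.support_subset_support_append_left _ _ ho) with rfl | hy
      · exact .inl (eq_of_mem_support_append h.isPath_right ho o₂.end_mem_support)
      · exact .inr hy

theorem start_mem (h : IsArcPair c p o) : a ∈ c.support :=
  (h.mem_support_iff a).2 (.inl p.start_mem_support)

theorem end_mem (h : IsArcPair c p o) : b ∈ c.support := h.symm.start_mem

theorem left_subset (h : IsArcPair c p o) : p.support ⊆ c.support :=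
  fun y hy ↦ (h.mem_support_iff y).2 (.inl hy)

theorem one_le_length (h : IsArcPair c p o) : 1 ≤ p.length :=
  Nat.one_le_iff_ne_zero.2 fun h0 ↦ h.ne (Walk.eq_of_length_eq_zero h0)

end IsArcPair

variable {c : G.Walk w w}

theorem exists_mem_support_ne (hc : c.IsCycle) (t : V) : ∃ y ∈ c.support, y ≠ t := by
  have hadj := c.adj_snd hc.not_nil
  by_cases hw : w = t
  · exact ⟨c.snd, c.getVert_mem_support 1, hw ▸ hadj.ne'⟩
  · exact ⟨w, c.start_mem_support, hw⟩

theorem exists_isArcPair (hc : c.IsCycle) (ha : a ∈ c.support) (hb : b ∈ c.support)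
    (hne : a ≠ b) : ∃ (p : G.Walk a b) (o : G.Walk b a), IsArcPair c p o := by
  classical
  have hb' : b ∈ (c.rotate a ha).support := (c.mem_support_rotate_iff a ha).2 hb
  exact ⟨_, _, .of_rotate_eq_append hc (Walk.take_spec _ hb').symm hne⟩

theorem exists_long_arc (hc : c.IsCycle) (ha : a ∈ c.support) (hb : b ∈ c.support)
    (hne : a ≠ b) :
    ∃ p : G.Walk a b, p.IsPath ∧ p.support ⊆ c.support ∧ c.length ≤ 2 * p.length := by
  obtain ⟨p, o, h⟩ := exists_isArcPair hc ha hb hne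
  rcases le_total o.length p.length with hle | hle
  · exact ⟨p, h.isPath_left, h.left_subset, by have := h.length_add; omega⟩
  · refine ⟨o.reverse, h.isPath_right.reverse, by simpa using h.symm.left_subset, ?_⟩
    rw [Walk.length_reverse]
    have := h.length_add
    omega

theorem exists_isArcPair_mem_edges_left (hc : c.IsCycle) (ha : a ∈ c.support)
    (hb : b ∈ c.support) (hne : a ≠ b) {e : Sym2 V} (he : e ∈ c.edges) :
    ∃ (p : G.Walk a b) (o : G.Walk b a), IsArcPair c p o ∧ e ∈ p.edges := by
  obtain ⟨p, o, h⟩ := exists_isArcPair hc ha hb hne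
  rcases (h.mem_edges_iff e).1 he with hp | ho
  · exact ⟨p, o, h, hp⟩
  · exact ⟨o.reverse, p.reverse, h.symm.reverse, by simpa using ho⟩

theorem exists_isArcPair_length_eq_one (hc : c.IsCycle) (he : s(a, b) ∈ c.edges) :
    ∃ (p : G.Walk a b) (o : G.Walk b a), IsArcPair c p o ∧ p.length = 1 := by
  obtain ⟨p, o, h, hep⟩ := exists_isArcPair_mem_edges_left hc (c.fst_mem_support_of_mem_edges he)
    (c.snd_mem_support_of_mem_edges he) (c.adj_of_mem_edges he).ne he
  exact ⟨p, o, h, h.isPath_left.length_eq_one_of_mem_edges hep⟩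

theorem exists_walk_notMem_of_isCycle (hc : c.IsCycle) (hu : u ∈ c.support) (hs : s ∈ c.support)
    (hut : u ≠ t) (hst : s ≠ t) :
    ∃ p : G.Walk u s, p.edges ⊆ c.edges ∧ t ∉ p.support := by
  by_cases hus : u = s
  · subst hus
    exact ⟨.nil, by simp, by simpa using hut.symm⟩
  obtain ⟨p, o, h⟩ := exists_isArcPair hc hu hs hus
  by_cases htp : t ∈ p.support
  · refine ⟨o.reverse, fun e he ↦ (h.mem_edges_iff e).2 (.inr (by simpa using he)), fun hto ↦ ?_⟩
    rcases h.eq_or_eq t htp (by simpa using hto) with rfl | rfl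
    · exact hut rfl
    · exact hst rfl
  · exact ⟨p, fun e he ↦ (h.mem_edges_iff e).2 (.inl he), htp⟩

theorem exists_crossing_edge_of_isCycle (hc : c.IsCycle) {F : Set V} (hu : u ∈ c.support)
    (huF : u ∈ F) (hut : u ≠ t) (hs : s ∈ c.support) (hsF : s ∉ F) (hst : s ≠ t) :
    ∃ y y', s(y, y') ∈ c.edges ∧ y ∈ F ∧ y' ∉ F ∧ y ≠ t ∧ y' ≠ t := by
  obtain ⟨p, hpc, htp⟩ := exists_walk_notMem_of_isCycle hc hu hs hut hst
  obtain ⟨d, hd, hfst, hsnd⟩ := p.exists_boundary_dart F huF hsF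
  refine ⟨d.fst, d.snd, hpc (List.mem_map_of_mem hd), hfst, hsnd, ?_, ?_⟩
  · exact ne_of_mem_of_not_mem (p.dart_fst_mem_support_of_mem_darts hd) htp
  · exact ne_of_mem_of_not_mem (p.dart_snd_mem_support_of_mem_darts hd) htp

theorem exists_isArcPair_first_last_mem (hc : c.IsCycle) {S : Set V} (hu : u ∈ c.support)
    (huS : u ∉ S) (hS : ∃ y ∈ c.support, y ∈ S) :
    ∃ a ∈ S, ∃ b ∈ S, ∃ (p : G.Walk u a) (o : G.Walk a b) (p' : G.Walk b u),
      IsArcPair c p (o.append p') ∧ (∀ y ∈ p.support, y ∈ S → y = a) ∧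
        ∀ y ∈ p'.support, y ∈ S → y = b := by
  classical
  obtain ⟨a, ha, b, hb, p, o, p', hsplit, hp, hp'⟩ := exists_eq_append_first_last_mem
    (c.rotate u hu) (hS.imp fun y ↦ And.imp_left (c.mem_support_rotate_iff u hu).2)
  exact ⟨a, ha, b, hb, p, o, p',
    .of_rotate_eq_append hc hsplit (ne_of_mem_of_not_mem ha huS).symm, hp, hp'⟩

theorem exists_arc_inside_or_forall_ne_mem (hc : c.IsCycle) {F : Set V}
    (hF : ∃ y ∈ c.support, y ∈ F) :
    (∃ y₀, ∀ y ∈ c.support, y ≠ y₀ → y ∈ F) ∨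
      ∃ (a b : V) (p : G.Walk a b) (o : G.Walk b a), IsArcPair c p o ∧ a ∉ F ∧ b ∉ F ∧
        2 ≤ p.length ∧ ∀ y ∈ p.support, y ≠ a → y ≠ b → y ∈ F := by
  obtain ⟨u, hu, huF⟩ := hF
  by_cases hall : ∀ y ∈ c.support, y ∈ F
  · exact .inl ⟨u, fun y hy _ ↦ hall y hy⟩
  push Not at hall
  obtain ⟨b, hbF, a, haF, p, o, p', harc, hp, hp'⟩ :=
    exists_isArcPair_first_last_mem (S := Fᶜ) hc hu (by simpa using huF) hall
  replace hp : ∀ y ∈ p.support, y ≠ b → y ∈ F := fun y hy ↦ not_imp_comm.1 (hp y hy)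
  replace hp' : ∀ y ∈ p'.support, y ≠ a → y ∈ F := fun y hy ↦ not_imp_comm.1 (hp' y hy)
  by_cases hba : b = a
  · subst hba
    refine .inl ⟨b, fun y hy hyb ↦ ?_⟩
    rw [harc.mem_support_iff, Walk.mem_support_append_iff,
      support_eq_of_isPath harc.isPath_right.of_append_left, List.mem_singleton] at hy
    rcases hy with hy | hy | hy
    exacts [hp y hy hyb, absurd hy hyb, hp' y hy hyb]
  · refine .inr ⟨a, b, p'.append p, o, harc.shift_start hba, haF, hbF, ?_, ?_⟩
    · have hlen : p'.length ≠ 0 := fun h0 ↦ haF (Walk.eq_of_length_eq_zero h0 ▸ huF)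
      have := harc.one_le_length
      rw [Walk.length_append]
      omega
    · intro y hy hya hyb
      rcases (Walk.mem_support_append_iff _ _).1 hy with hy | hy
      exacts [hp' y hy hya, hp y hy hyb]

end Walks

section LongestCycles

variable {V : Type} {G : SimpleGraph V} {a b s t u v w z : V}

namespace TwoConnected

theorem exists_walk_notMem (h2 : TwoConnected G) (hu : u ≠ v) (hw : w ≠ v) :
    ∃ p : G.Walk u w, v ∉ p.support := by
  obtain ⟨p, hp⟩ := exists_walk_of_connected_induce (h2.2 v) hu hw
  exact ⟨p, fun hv ↦ hp v hv rfl⟩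

theorem preconnected (h2 : TwoConnected G) : G.Preconnected := by
  intro u w
  obtain ⟨v, hv⟩ : ∃ v, v ∉ ({u, w} : Set V) := by
    by_contra! hall
    have hcard := (Set.ncard_insert_le u {w}).trans_eq (by rw [Set.ncard_singleton])
    rw [Set.eq_univ_of_forall hall, Set.ncard_univ] at hcard
    exact absurd h2.1 hcard.not_gt
  simp only [Set.mem_insert_iff, Set.mem_singleton_iff, not_or] at hv
  obtain ⟨p, -⟩ := h2.exists_walk_notMem (Ne.symm hv.1) (Ne.symm hv.2)
  exact ⟨p⟩

theorem exists_isSetPath_notMem (h2 : TwoConnected G) {A B : Set V} (hA : ∃ a ∈ A, a ≠ v)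
    (hB : ∃ b ∈ B, b ≠ v) :
    ∃ (a b : V) (p : G.Walk a b), IsSetPath A B p ∧ v ∉ p.support := by
  obtain ⟨a, ha, hav⟩ := hA
  obtain ⟨b, hb, hbv⟩ := hB
  obtain ⟨p, hp⟩ := h2.exists_walk_notMem hav hbv
  obtain ⟨a', b', o, ho, hsub⟩ := exists_isSetPath_of_walk p ha hb
  exact ⟨a', b', o, ho, fun hv ↦ hp (hsub hv)⟩

theorem exists_isCycle_mem_edges_of_mem_support (h2 : TwoConnected G) {c : G.Walk z z}
    (hc : c.IsCycle) {e : Sym2 V} (he : e ∈ c.edges) (hv : v ∈ c.support) (hvw : G.Adj v w) :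
    ∃ (z' : V) (d : G.Walk z' z'), d.IsCycle ∧ e ∈ d.edges ∧ s(v, w) ∈ d.edges := by
  by_cases hmem : s(v, w) ∈ c.edges
  · exact ⟨z, c, hc, he, hmem⟩
  obtain ⟨w', h, ear, hear, hvear⟩ := h2.exists_isSetPath_notMem (v := v) (A := {w})
    (B := {y | y ∈ c.support}) ⟨w, rfl, hvw.ne'⟩ (exists_mem_support_ne hc v)
  obtain rfl : w' = w := hear.start_mem
  have hhv : h ≠ v := ne_of_mem_of_not_mem ear.end_mem_support hvear
  obtain ⟨p, o, harc, hep⟩ := exists_isArcPair_mem_edges_left hc hear.end_mem hv hhv he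
  refine ⟨v, (ear.cons hvw).append p, isCycle_append_of_inter_eq
    (hear.isPath.cons hvear) harc.isPath_left ?_ ?_, by simp [hep], by simp⟩
  · intro y hy hyp
    rcases List.mem_cons.1 (Walk.support_cons hvw ear ▸ hy) with hy | hy
    · exact .inl hy
    · exact .inr (hear.eq_end y hy (harc.left_subset hyp))
  · by_contra! hlen
    obtain rfl := Walk.eq_of_length_eq_zero (p := ear) (by simpa using hlen.1)
    refine hmem ((harc.mem_edges_iff _).2 (.inl ?_))
    rw [Walk.eq_of_length_le_one (q := hvw.symm.toWalk) hlen.2 (by simp)]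
    simp

theorem exists_isCycle_mem_support_of_walk (h2 : TwoConnected G) {c : G.Walk z z}
    (hc : c.IsCycle) {e : Sym2 V} (he : e ∈ c.edges) (hu : u ∈ c.support) (p : G.Walk u v) :
    ∃ (z' : V) (d : G.Walk z' z'), d.IsCycle ∧ e ∈ d.edges ∧ v ∈ d.support := by
  induction p generalizing z with
  | nil => exact ⟨z, c, hc, he, hu⟩
  | cons hadj _ ih =>
    obtain ⟨z', d, hd, hed, hmem⟩ := h2.exists_isCycle_mem_edges_of_mem_support hc he hu hadj
    exact ih hd hed (d.snd_mem_support_of_mem_edges hmem)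

theorem exists_isCycle_mem_edges (h2 : TwoConnected G) {c : G.Walk z z} (hc : c.IsCycle)
    {e : Sym2 V} (he : e ∈ c.edges) (hvw : G.Adj v w) :
    ∃ (z' : V) (d : G.Walk z' z'), d.IsCycle ∧ e ∈ d.edges ∧ s(v, w) ∈ d.edges := by
  obtain ⟨p⟩ := h2.preconnected z v
  obtain ⟨z', d, hd, hed, hvd⟩ :=
    h2.exists_isCycle_mem_support_of_walk hc he c.start_mem_support p
  exact h2.exists_isCycle_mem_edges_of_mem_support hd hed hvd hvw

/-- This case of Menger's theorem follows from a cycle containing an edge of each of `c` and `d`. -/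
theorem exists_disjoint_isSetPath (h2 : TwoConnected G) {c : G.Walk u u} {d : G.Walk v v}
    (hc : c.IsCycle) (hd : d.IsCycle) :
    ∃ (a b a' b' : V) (p : G.Walk a b) (p' : G.Walk a' b'),
      IsSetPath {y | y ∈ c.support} {y | y ∈ d.support} p ∧
        IsSetPath {y | y ∈ c.support} {y | y ∈ d.support} p' ∧ p.support.Disjoint p'.support := by
  obtain ⟨z, k, hk, hkc, hkd⟩ := h2.exists_isCycle_mem_edges hc
    (Walk.mk_start_snd_mem_edges hc.not_nil) (d.adj_snd hd.not_nil)
  obtain ⟨p, o, harc, hp⟩ := exists_isArcPair_length_eq_one hk hkc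
  have hko : ∀ y ∈ k.support, y ∈ o.support := fun y hy ↦ by
    rcases (harc.mem_support_iff y).1 hy with hyp | hyo
    · rcases eq_or_eq_of_length_eq_one hp hyp with rfl | rfl <;> simp
    · exact hyo
  have hvo := hko _ (k.fst_mem_support_of_mem_edges hkd)
  have hvo' := hko _ (k.snd_mem_support_of_mem_edges hkd)
  obtain ⟨b, hb, b', hb', o₁, m, o₂, rfl, hfirst, hlast⟩ :=
    exists_eq_append_first_last_mem o (S := {y | y ∈ d.support}) ⟨v, hvo, d.start_mem_support⟩
  have hbb' : b ≠ b' := by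
    rintro rfl
    have hb {y : V} := eq_of_mem_of_first_eq_last (y := y) harc.isPath_right hfirst hlast
    exact (d.adj_snd hd.not_nil).ne
      ((hb hvo d.start_mem_support).trans (hb hvo' (d.getVert_mem_support 1)).symm)
  have hdisj : o₁.support.Disjoint o₂.support := fun y hy₁ hy₂ ↦ by
    obtain rfl := eq_of_mem_support_append harc.isPath_right hy₁
      (Walk.support_subset_support_append_right _ _ hy₂)
    exact hbb' (eq_of_mem_support_append harc.isPath_right.of_append_right
      m.start_mem_support hy₂)
  obtain ⟨a₁, b₁, r₁, hr₁, hsub₁⟩ := exists_isSetPath_of_walk (A := {y | y ∈ c.support}) o₁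
    (c.getVert_mem_support 1) hb
  obtain ⟨a₂, b₂, r₂, hr₂, hsub₂⟩ := exists_isSetPath_of_walk (A := {y | y ∈ c.support})
    o₂.reverse c.start_mem_support hb'
  exact ⟨a₁, b₁, a₂, b₂, r₁, r₂, hr₁, hr₂,
    fun y hy₁ hy₂ ↦ hdisj (hsub₁ hy₁) (by simpa using hsub₂ hy₂)⟩

end TwoConnected

namespace IsLongestCycle

variable {c : G.Walk u u} {d : G.Walk v v}

theorem length_eq (hc : IsLongestCycle G c) (hd : IsLongestCycle G d) : c.length = d.length :=
  le_antisymm (hd.2 _ _ hc.1) (hc.2 _ _ hd.1)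

theorem length_le_of_isArcPair (hc : IsLongestCycle G c) {p p' : G.Walk a b} {o : G.Walk b a}
    (h : IsArcPair c p o) (hp' : p'.IsPath)
    (hinter : ∀ y ∈ p'.support, y ∈ o.support → y = a ∨ y = b) : p'.length ≤ p.length := by
  by_contra! hlt
  have hcycle := isCycle_append_of_inter_eq hp' h.isPath_right hinter
    (.inl (h.one_le_length.trans_lt hlt))
  have hle := hc.2 _ _ hcycle
  rw [Walk.length_append, ← h.length_add] at hle
  omega

theorem two_mul_length_le (hc : IsLongestCycle G c) {p : G.Walk a b} (hp : p.IsPath)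
    (ha : a ∈ c.support) (hb : b ∈ c.support) (hne : a ≠ b)
    (hinter : ∀ y ∈ p.support, y ∈ c.support → y = a ∨ y = b) : 2 * p.length ≤ c.length := by
  obtain ⟨r, o, h⟩ := exists_isArcPair hc.1 ha hb hne
  have hr := hc.length_le_of_isArcPair h hp fun y hy ho ↦ hinter y hy (h.symm.left_subset ho)
  have ho := hc.length_le_of_isArcPair h.symm hp.reverse fun y hy hr ↦
    (hinter y (by simpa using hy) (h.left_subset hr)).symm
  rw [Walk.length_reverse] at ho
  have := h.length_add
  omega

theorem exists_mem_support_and_mem_support (hc : IsLongestCycle G c) (hd : IsLongestCycle G d)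
    (h2 : TwoConnected G) : ∃ y, y ∈ c.support ∧ y ∈ d.support := by
  by_contra! hdisj
  obtain ⟨a, b, a', b', p, p', hp, hp', hpp'⟩ := h2.exists_disjoint_isSetPath hc.1 hd.1
  have haa' : a ≠ a' := fun h ↦ hpp' p.start_mem_support (h ▸ p'.start_mem_support)
  have hbb' : b ≠ b' := fun h ↦ hpp' p.end_mem_support (h ▸ p'.end_mem_support)
  obtain ⟨m, hm, hmd, hlen⟩ := exists_long_arc hd.1 hp.end_mem hp'.end_mem hbb'
  have hpm : (p.append m).IsPath := isPath_append_of_inter_eq hp.isPath hm fun y hy hym ↦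
    hp.eq_end y hy (hmd hym)
  have hear : ((p.append m).append p'.reverse).IsPath := by
    refine isPath_append_of_inter_eq hpm hp'.isPath.reverse fun y hy hy' ↦ ?_
    rw [Walk.support_reverse, List.mem_reverse] at hy'
    rcases (Walk.mem_support_append_iff _ _).1 hy with hy | hy
    · exact absurd hy' (hpp' hy)
    · exact hp'.eq_end y hy' (hmd hy)
  have hle := hc.two_mul_length_le hear hp.start_mem hp'.start_mem haa' fun y hy hyc ↦ by
    simp only [Walk.mem_support_append_iff, Walk.support_reverse, List.mem_reverse] at hy
    rcases hy with (hy | hy) | hy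
    · exact .inl (hp.eq_start y hy hyc)
    · exact absurd (hmd hy) (hdisj y hyc)
    · exact .inr (hp'.eq_start y hy hyc)
  simp only [Walk.length_append, Walk.length_reverse] at hle
  have hab : a = b := Walk.eq_of_length_eq_zero (p := p) (by have := hc.length_eq hd; omega)
  exact hdisj a hp.start_mem (hab ▸ hp.end_mem)

theorem exists_ne_mem_support_and_mem_support (hc : IsLongestCycle G c)
    (hd : IsLongestCycle G d) (h2 : TwoConnected G) (hsc : s ∈ c.support) (hsd : s ∈ d.support) :
    ∃ y, y ≠ s ∧ y ∈ c.support ∧ y ∈ d.support := by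
  by_contra! hcommon
  obtain ⟨b, h, p, hp, hsp⟩ := h2.exists_isSetPath_notMem (v := s) (A := {y | y ∈ d.support})
    (B := {y | y ∈ c.support}) (exists_mem_support_ne hd.1 s) (exists_mem_support_ne hc.1 s)
  have hbs : b ≠ s := ne_of_mem_of_not_mem p.start_mem_support hsp
  have hhs : h ≠ s := ne_of_mem_of_not_mem p.end_mem_support hsp
  obtain ⟨m, hm, hmd, hlen⟩ := exists_long_arc hd.1 hsd hp.start_mem hbs.symm
  have hear : (m.append p).IsPath := isPath_append_of_inter_eq hm hp.isPath fun y hym hyp ↦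
    hp.eq_start y hyp (hmd hym)
  have hle := hc.two_mul_length_le hear hsc hp.end_mem hhs.symm fun y hy hyc ↦ by
    rcases (Walk.mem_support_append_iff _ _).1 hy with hy | hy
    · by_contra! hys
      exact hcommon y hys.1 hyc (hmd hy)
    · exact .inr (hp.eq_end y hy hyc)
  rw [Walk.length_append] at hle
  have hbh : b = h := Walk.eq_of_length_eq_zero (p := p) (by have := hc.length_eq hd; omega)
  exact hcommon b hbs (hbh ▸ hp.end_mem) hp.start_mem

theorem nontrivial_inter (hc : IsLongestCycle G c) (hd : IsLongestCycle G d)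
    (h2 : TwoConnected G) : {y | y ∈ c.support ∧ y ∈ d.support}.Nontrivial := by
  obtain ⟨s, hsc, hsd⟩ := hc.exists_mem_support_and_mem_support hd h2
  obtain ⟨y, hys, hyc, hyd⟩ := hc.exists_ne_mem_support_and_mem_support hd h2 hsc hsd
  exact ⟨y, ⟨hyc, hyd⟩, s, ⟨hsc, hsd⟩, hys⟩

end IsLongestCycle

end LongestCycles

section Trees

variable {W : Type} {T : SimpleGraph W} {a r t t' x y y' z : W}

theorem mem_support_of_mem_rootedSubtree (h : t ∈ rootedSubtree T a y) (p : T.Walk a t) :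
    y ∈ p.support := by
  classical
  exact p.support_bypass_subset_support (h p.bypass p.bypass_isPath)

theorem exists_isPath_of_notMem_rootedSubtree (h : t ∉ rootedSubtree T a y) :
    ∃ p : T.Walk a t, p.IsPath ∧ y ∉ p.support := by
  simpa [rootedSubtree] using h

theorem mem_rootedSubtree_of_isPath (hT : T.IsTree) {p : T.Walk a t} (hp : p.IsPath)
    (hy : y ∈ p.support) : t ∈ rootedSubtree T a y := fun p' hp' ↦ by
  rwa [(hT.existsUnique_path a t).unique hp' hp]

theorem rootedSubtree_subset_of_mem (h : y' ∈ rootedSubtree T a y) :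
    rootedSubtree T a y' ⊆ rootedSubtree T a y := by
  classical
  intro t ht p hp
  have hy' := ht p hp
  exact p.support_takeUntil_subset_support hy' (h _ (hp.takeUntil hy'))

theorem mem_of_connected_of_mem_rootedSubtree {S : Set W} (hS : (T.induce S).Connected)
    (ht : t ∈ S) (ht' : t' ∈ S) (h : t ∉ rootedSubtree T a y) (h' : t' ∈ rootedSubtree T a y) :
    y ∈ S := by
  obtain ⟨p, -, hp⟩ := exists_isPath_of_notMem_rootedSubtree h
  obtain ⟨o, ho⟩ := exists_walk_of_connected_induce hS ht ht'
  have hy := mem_support_of_mem_rootedSubtree h' (p.append o)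
  exact ho y (((Walk.mem_support_append_iff _ _).1 hy).resolve_left hp)

theorem eq_of_adj_of_notMem_rootedSubtree (ht : t ∈ rootedSubtree T r x)
    (ht' : t' ∉ rootedSubtree T r x) (hadj : T.Adj t t') : t = x := by
  obtain ⟨p, -, hp⟩ := exists_isPath_of_notMem_rootedSubtree ht'
  have hx := mem_support_of_mem_rootedSubtree ht (p.concat hadj.symm)
  rw [Walk.support_concat, List.mem_append, List.mem_singleton] at hx
  exact (hx.resolve_left hp).symm

variable (q : T.Walk x z)

open Classical in
/-- The index on the path `q` at which the path from its start `x` to `t` leaves `q`; when `T` is a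
tree, `q.getVert (projIdx q t)` is the projection of `t` to `q`. -/
noncomputable def projIdx (t : W) : ℕ :=
  Nat.findGreatest (fun k ↦ t ∈ rootedSubtree T x (q.getVert k)) q.length

theorem projIdx_le_length (t : W) : projIdx q t ≤ q.length := by
  classical
  exact Nat.findGreatest_le _

theorem mem_rootedSubtree_getVert_projIdx (t : W) :
    t ∈ rootedSubtree T x (q.getVert (projIdx q t)) := by
  classical
  exact Nat.findGreatest_spec (P := fun k ↦ t ∈ rootedSubtree T x (q.getVert k)) (Nat.zero_le _)
    fun p _ ↦ by simp

variable {q}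

theorem getVert_mem_rootedSubtree (hT : T.IsTree) (hq : q.IsPath) {i j : ℕ} (hij : i ≤ j) :
    q.getVert j ∈ rootedSubtree T x (q.getVert i) := by
  have hi : (q.take j).getVert i = q.getVert i := by rw [Walk.take_getVert, min_eq_right hij]
  exact mem_rootedSubtree_of_isPath hT (hq.take j) (hi ▸ Walk.getVert_mem_support _ _)

theorem le_projIdx_iff (hT : T.IsTree) (hq : q.IsPath) {k : ℕ} (hk : k ≤ q.length) :
    k ≤ projIdx q t ↔ t ∈ rootedSubtree T x (q.getVert k) := by
  classical
  refine ⟨fun h ↦ ?_, fun h ↦ Nat.le_findGreatest hk h⟩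
  exact rootedSubtree_subset_of_mem (getVert_mem_rootedSubtree hT hq h)
    (mem_rootedSubtree_getVert_projIdx q t)

theorem projIdx_getVert (hT : T.IsTree) (hq : q.IsPath) {k : ℕ} (hk : k ≤ q.length) :
    projIdx q (q.getVert k) = k := by
  refine le_antisymm ?_ ((le_projIdx_iff hT hq hk).2 (getVert_mem_rootedSubtree hT hq le_rfl))
  have hmem := mem_rootedSubtree_getVert_projIdx q (q.getVert k) (q.take k) (hq.take k)
  obtain ⟨l, hl, -⟩ := Walk.mem_support_iff_exists_getVert.1 hmem
  rw [Walk.take_getVert] at hl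
  have := hq.getVert_injOn (by simp; omega) (by simpa using projIdx_le_length q _) hl
  omega

theorem getVert_mem_of_projIdx_lt (hT : T.IsTree) (hq : q.IsPath) {S : Set W}
    (hS : (T.induce S).Connected) (ht : t ∈ S) (ht' : t' ∈ S) {k : ℕ} (hk : projIdx q t < k)
    (hk' : k ≤ projIdx q t') : q.getVert k ∈ S := by
  have hkq : k ≤ q.length := hk'.trans (projIdx_le_length q t')
  refine mem_of_connected_of_mem_rootedSubtree (a := x) hS ht ht' ?_
    ((le_projIdx_iff hT hq hkq).1 hk')
  rwa [← le_projIdx_iff hT hq hkq, not_le]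

theorem getVert_projIdx_mem_of_lt (hT : T.IsTree) (hq : q.IsPath) {S : Set W}
    (hS : (T.induce S).Connected) (ht : t ∈ S) (ht' : t' ∈ S)
    (hlt : projIdx q t < projIdx q t') : q.getVert (projIdx q t) ∈ S := by
  classical
  set k := projIdx q t
  have hkq : k + 1 ≤ q.length := hlt.trans_le (projIdx_le_length q t')
  have hnext : q.getVert (k + 1) ∈ S := getVert_mem_of_projIdx_lt hT hq hS ht ht' (by omega) hlt
  have hadj : T.Adj (q.getVert (k + 1)) (q.getVert k) := (q.adj_getVert_succ (by omega)).symm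
  obtain ⟨p, hp, hpn⟩ : ∃ p : T.Walk x t, p.IsPath ∧ q.getVert (k + 1) ∉ p.support :=
    exists_isPath_of_notMem_rootedSubtree (by rw [← le_projIdx_iff hT hq hkq]; omega)
  have hmem : q.getVert k ∈ p.support := mem_rootedSubtree_getVert_projIdx q t p hp
  have hpath : ((p.dropUntil _ hmem).cons hadj).IsPath :=
    (hp.dropUntil hmem).cons fun h ↦ hpn (p.support_dropUntil_subset_support hmem h)
  refine mem_of_connected_of_mem_rootedSubtree (a := q.getVert (k + 1)) hS hnext ht (fun h ↦ ?_)
    (mem_rootedSubtree_of_isPath hT hpath (by simp))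
  exact hadj.ne' (by simpa using h .nil .nil)

theorem getVert_mem_of_connected (hT : T.IsTree) (hq : q.IsPath) {S : Set W}
    (hS : (T.induce S).Connected) (ht : t ∈ S) (ht' : t' ∈ S) {k : ℕ} (hk : projIdx q t ≤ k)
    (hk' : k ≤ projIdx q t') (hlt : projIdx q t < projIdx q t') : q.getVert k ∈ S := by
  rcases hk.lt_or_eq with hk | rfl
  · exact getVert_mem_of_projIdx_lt hT hq hS ht ht' hk hk'
  · exact getVert_projIdx_mem_of_lt hT hq hS ht ht' hlt

theorem getVert_projIdx_mem_of_getVert_mem (hT : T.IsTree) (hq : q.IsPath) {S : Set W}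
    (hS : (T.induce S).Connected) (ht : t ∈ S) {l : ℕ} (hl : l ≤ q.length)
    (hlS : q.getVert l ∈ S) : q.getVert (projIdx q t) ∈ S := by
  have hproj := projIdx_getVert hT hq hl
  rcases lt_trichotomy (projIdx q t) l with h | h | h
  · exact getVert_projIdx_mem_of_lt hT hq hS ht hlS (by omega)
  · exact h ▸ hlS
  · exact getVert_mem_of_projIdx_lt hT hq hS hlS ht (by omega) le_rfl

theorem projIdx_eq_of_connected (hT : T.IsTree) (hq : q.IsPath) {S : Set W}
    (hS : (T.induce S).Connected) (hqS : ∀ y ∈ q.support, y ∉ S) (ht : t ∈ S) (ht' : t' ∈ S) :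
    projIdx q t = projIdx q t' := by
  rcases lt_trichotomy (projIdx q t) (projIdx q t') with h | h | h
  · exact absurd (getVert_projIdx_mem_of_lt hT hq hS ht ht' h) (hqS _ (q.getVert_mem_support _))
  · exact h
  · exact absurd (getVert_projIdx_mem_of_lt hT hq hS ht' ht h) (hqS _ (q.getVert_mem_support _))

theorem projIdx_eq_zero_of_notMem (hT : T.IsTree) (hq : q.IsPath)
    (hqX : ∀ y ∈ q.support, y ∈ rootedSubtree T r x) (ht : t ∉ rootedSubtree T r x) :
    projIdx q t = 0 := by
  classical
  obtain ⟨p, -, hp⟩ := exists_isPath_of_notMem_rootedSubtree ht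
  obtain ⟨d, hd⟩ := (hT.existsUnique_path x t).exists
  have hmem := mem_rootedSubtree_getVert_projIdx q t d hd
  have hx := mem_support_of_mem_rootedSubtree (hqX _ (q.getVert_mem_support (projIdx q t)))
    (p.append (d.dropUntil _ hmem).reverse)
  rw [Walk.mem_support_append_iff, Walk.support_reverse, List.mem_reverse] at hx
  have heq : x = q.getVert (projIdx q t) := eq_of_mem_support_append
    ((d.take_spec hmem).symm ▸ hd) (Walk.start_mem_support _) (hx.resolve_left hp)
  rw [← projIdx_getVert hT hq (projIdx_le_length q t), ← heq]
  simpa using projIdx_getVert hT hq (Nat.zero_le _)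

theorem exists_isCompOf {s : Set W} (ht : t ∈ s) : ∃ C, IsCompOf T s C ∧ t ∈ C := by
  classical
  let C : Set W := {y | ∃ p : T.Walk t y, ∀ u ∈ p.support, u ∈ s}
  have htC : t ∈ C := ⟨.nil, by simpa using ht⟩
  refine ⟨C, ⟨⟨t, htC⟩, fun y ⟨p, hp⟩ ↦ hp y p.end_mem_support, ?_, ?_⟩, htC⟩
  · rw [connected_iff_exists_forall_reachable]
    refine ⟨⟨t, htC⟩, fun ⟨y, p, hp⟩ ↦ ⟨p.induce C fun u hu ↦ ?_⟩⟩
    exact ⟨p.takeUntil u hu, fun v hv ↦ hp v (p.support_takeUntil_subset_support hu hv)⟩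
  · rintro y y' ⟨p, hp⟩ hy' hadj
    refine ⟨p.concat hadj, fun u hu ↦ ?_⟩
    rw [Walk.support_concat, List.mem_append, List.mem_singleton] at hu
    rcases hu with hu | rfl
    exacts [hp u hu, hy']

namespace IsCompOf

theorem exists_adj_notMem {s C S : Set W} (hC : IsCompOf T s C) (hS : (T.induce S).Connected)
    (hmeet : (S ∩ C).Nonempty) (hsub : ¬ S ⊆ C) : ∃ y ∈ S ∩ C, ∃ y' ∈ S \ s, T.Adj y y' := by
  obtain ⟨t, htS, htC⟩ := hmeet
  obtain ⟨t', ht'S, ht'C⟩ := Set.not_subset.1 hsub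
  obtain ⟨p, hp⟩ := exists_walk_of_connected_induce hS htS ht'S
  obtain ⟨d, hd, hfst, hsnd⟩ := p.exists_boundary_dart C htC ht'C
  exact ⟨d.fst, ⟨hp _ (p.dart_fst_mem_support_of_mem_darts hd), hfst⟩, d.snd,
    ⟨hp _ (p.dart_snd_mem_support_of_mem_darts hd), fun h ↦ hsnd (hC.2.2.2 hfst h d.adj)⟩, d.adj⟩

theorem getVert_projIdx_mem (hT : T.IsTree) (hq : q.IsPath) {C S : Set W}
    (hC : IsCompOf T (rootedSubtree T r x \ {y | y ∈ q.support}) C) (ht : t ∈ C)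
    (hS : (T.induce S).Connected) (hmeet : (S ∩ C).Nonempty) (hsub : ¬ S ⊆ C) :
    q.getVert (projIdx q t) ∈ S := by
  obtain ⟨y, ⟨hyS, hyC⟩, y', ⟨hy'S, hy'⟩, hadj⟩ := hC.exists_adj_notMem hS hmeet hsub
  have hyX := hC.2.1 hyC
  have hy'q : y' ∈ q.support := by
    by_contra hnot
    have hy'X : y' ∉ rootedSubtree T r x := fun h ↦ hy' ⟨h, hnot⟩
    exact hyX.2 (eq_of_adj_of_notMem_rootedSubtree hyX.1 hy'X hadj ▸ q.start_mem_support)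
  obtain ⟨l, rfl, hl⟩ := Walk.mem_support_iff_exists_getVert.1 hy'q
  rw [projIdx_eq_of_connected hT hq hC.2.2.1 (fun u hu huC ↦ (hC.2.1 huC).2 hu) ht hyC]
  exact getVert_projIdx_mem_of_getVert_mem hT hq hS hyS hl hy'S

end IsCompOf

end Trees

theorem exists_minimal_window {ι : Type*} {K : ι → Set ℕ} (hne : ∀ i, (K i).Nonempty) {m : ℕ}
    (hm : ∀ i, ∀ k ∈ K i, k ≤ m) :
    ∃ l n, (∀ i, (K i ∩ Set.Icc l n).Nonempty) ∧
      (l < n → (∃ i, ∀ k ∈ K i, k ≤ l ∨ n < k) ∧ ∃ i, ∀ k ∈ K i, k < l ∨ n ≤ k) := by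
  classical
  have hex : ∃ d l, ∀ i, (K i ∩ Set.Icc l (l + d)).Nonempty :=
    ⟨m, 0, fun i ↦ (hne i).imp fun k hk ↦ ⟨hk, k.zero_le, by simpa using hm i k hk⟩⟩
  obtain ⟨l, hl⟩ := Nat.find_spec hex
  set d := Nat.find hex
  refine ⟨l, l + d, hl, fun hlt ↦ ?_⟩
  have hmin := Nat.find_min hex (m := d - 1) (by omega)
  push Not at hmin
  obtain ⟨i, hi⟩ := hmin (l + 1)
  obtain ⟨i', hi'⟩ := hmin l
  refine ⟨⟨i, fun k hk ↦ ?_⟩, i', fun k hk ↦ ?_⟩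
  · by_contra! hkl
    exact Set.eq_empty_iff_forall_notMem.1 hi k ⟨hk, hkl.1, by omega⟩
  · by_contra! hkl
    exact Set.eq_empty_iff_forall_notMem.1 hi' k ⟨hk, hkl.1, by omega⟩

section WalkExtension

variable {V : Type*} {G : SimpleGraph V} {a b u v w w' : V}

theorem exists_isPath_extend_start {p : G.Walk u v} (hp : p.IsPath) (hadj : w ≠ u → G.Adj w u)
    (hw : w ∈ p.support → w = u) :
    ∃ o : G.Walk w v, o.IsPath ∧ p.length ≤ o.length ∧ o.support ⊆ w :: p.support := by
  by_cases h : w = u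
  · subst h
    exact ⟨p, hp, le_rfl, List.subset_cons_self _ _⟩
  · exact ⟨p.cons (hadj h), hp.cons (mt hw h), by simp, by simp⟩

theorem exists_isPath_extend {p : G.Walk u v} (hp : p.IsPath) (hadj : w ≠ u → G.Adj w u)
    (hadj' : w' ≠ v → G.Adj w' v) (hw : w ∈ p.support → w = u) (hw' : w' ∈ p.support → w' = v)
    (hne : w ≠ w') :
    ∃ o : G.Walk w w', o.IsPath ∧ p.length ≤ o.length ∧ o.support ⊆ w :: w' :: p.support := by
  obtain ⟨o, ho, hlen, hsub⟩ := exists_isPath_extend_start hp hadj hw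
  obtain ⟨o', ho', hlen', hsub'⟩ := exists_isPath_extend_start ho.reverse hadj' fun h ↦ by
    have := hsub (by simpa using h)
    grind
  refine ⟨o'.reverse, ho'.reverse, ?_, fun y hy ↦ ?_⟩
  · simp only [Walk.length_reverse] at hlen' ⊢
    omega
  · have := hsub' (by simpa using hy)
    simp only [Walk.support_reverse, List.mem_cons, List.mem_reverse] at this ⊢
    grind

theorem exists_isPath_between_of_isClique {K : Set V} (hK : G.IsClique K) {p : G.Walk u v}
    (hp : p.IsPath) (hu : u ∈ K) (hv : v ∈ K)
    (hpK : ∀ y ∈ p.support, y ∈ K → y = u ∨ y = v) (hw : w ∈ K) (hw' : w' ∈ K) (hne : w ≠ w') :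
    ∃ o : G.Walk w w', o.IsPath ∧ p.length ≤ o.length ∧ o.support ⊆ w :: w' :: p.support := by
  by_cases h : w = v ∨ w' = u
  · obtain ⟨o, ho, hlen, hsub⟩ := exists_isPath_extend hp.reverse (hK hw hv) (hK hw' hu)
      (by grind [Walk.support_reverse]) (by grind [Walk.support_reverse]) hne
    exact ⟨o, ho, by simpa using hlen, fun y hy ↦ by simpa using hsub hy⟩
  · exact exists_isPath_extend hp (hK hw hu) (hK hw' hv) (by grind) (by grind) hne

theorem exists_adj_start_interior {p : G.Walk a b} (hp : p.IsPath) (hlen : 2 ≤ p.length) :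
    ∃ y ∈ p.support, y ≠ a ∧ y ≠ b ∧ G.Adj a y := by
  have hadj : G.Adj a (p.getVert 1) := by
    simpa using p.adj_getVert_succ (i := 0) (by omega)
  refine ⟨p.getVert 1, p.getVert_mem_support 1, hadj.ne', fun h ↦ ?_, hadj⟩
  have := (hp.getVert_eq_end_iff (by omega)).1 h
  omega

end WalkExtension

section Representations

variable {V W : Type} {G : SimpleGraph V} {T : SimpleGraph W} {s t u v w y : V}

namespace TreeRep

variable (R : TreeRep G T)

theorem isClique_bag (t : W) : G.IsClique (R.bag t) := fun u hu v hv huv ↦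
  (R.adj_iff u v huv).2 ⟨t, hu, hv⟩

theorem mem_core_toSubgraph_iff {p : G.Walk u v} {t : W} :
    t ∈ R.core p.toSubgraph ↔ ∃ y y', s(y, y') ∈ p.edges ∧ t ∈ R.S y ∧ t ∈ R.S y' := by
  simp only [core, Set.mem_ofPred_eq, Walk.adj_toSubgraph_iff_mem_edges]

theorem core_inter_nonempty_of_subset {c : G.Walk u u} (hc : c.IsCycle) (hy : y ∈ c.support)
    {X : Set W} (hX : R.S y ⊆ X) : (R.core c.toSubgraph ∩ X).Nonempty := by
  classical
  have hnil := (hc.rotate hy).not_nil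
  obtain ⟨t, ht, ht'⟩ := (R.adj_iff _ _ (Walk.adj_snd hnil).ne).1 (Walk.adj_snd hnil)
  refine ⟨t, R.mem_core_toSubgraph_iff.2 ⟨y, _, ?_, ht, ht'⟩, hX ht⟩
  exact (c.rotate_edges y hy).mem_iff.1 (Walk.mk_start_snd_mem_edges hnil)

/-- Walking along `c` without using `w`, one cannot get from the subtrees meeting `A` to the
others. -/
theorem inter_nonempty_of_core_subset {c : G.Walk u u} (hc : c.IsCycle) {A B : Set W}
    (hcore : R.core c.toSubgraph ⊆ A ∪ B) (hA : (R.core c.toSubgraph ∩ A).Nonempty)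
    (hsep : ∀ y ≠ w, (R.S y ∩ A).Nonempty → ¬ (R.S y ∩ B).Nonempty) (hs : s ∈ c.support)
    (hsw : s ≠ w) : (R.S s ∩ A).Nonempty := by
  by_contra hsA
  obtain ⟨v, hv, hvA, hvw⟩ : ∃ v ∈ c.support, (R.S v ∩ A).Nonempty ∧ v ≠ w := by
    obtain ⟨t, ht, htA⟩ := hA
    obtain ⟨y, y', he, hty, hty'⟩ := R.mem_core_toSubgraph_iff.1 ht
    by_cases hy : y = w
    · exact ⟨y', c.snd_mem_support_of_mem_edges he, ⟨t, hty', htA⟩,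
        hy ▸ (c.adj_of_mem_edges he).ne'⟩
    · exact ⟨y, c.fst_mem_support_of_mem_edges he, ⟨t, hty, htA⟩, hy⟩
  obtain ⟨y, y', he, hyA, hy'A, hyw, -⟩ := exists_crossing_edge_of_isCycle
    (F := {y | (R.S y ∩ A).Nonempty}) hc hv hvA hvw hs hsA hsw
  have hadj := c.adj_of_mem_edges he
  obtain ⟨t, hty, hty'⟩ := (R.adj_iff _ _ hadj.ne).1 hadj
  rcases hcore (R.mem_core_toSubgraph_iff.2 ⟨y, y', he, hty, hty'⟩) with htA | htB
  · exact hy'A ⟨t, hty', htA⟩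
  · exact hsep y hyw hyA ⟨t, hty, htB⟩

theorem nontrivial_setOf_inter_nonempty (h2 : TwoConnected G) {c : G.Walk u u} {d : G.Walk v v}
    (hc : IsLongestCycle G c) (hd : IsLongestCycle G d) {A B : Set W}
    (hcAB : R.core c.toSubgraph ⊆ A ∪ B) (hdAB : R.core d.toSubgraph ⊆ A ∪ B)
    (hcA : (R.core c.toSubgraph ∩ A).Nonempty) (hdB : (R.core d.toSubgraph ∩ B).Nonempty) :
    {y | (R.S y ∩ A).Nonempty ∧ (R.S y ∩ B).Nonempty}.Nontrivial := by
  have hex (w : V) : ∃ y, ((R.S y ∩ A).Nonempty ∧ (R.S y ∩ B).Nonempty) ∧ y ≠ w := by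
    by_contra! hsep
    obtain ⟨s, ⟨hsc, hsd⟩, hsw⟩ := (hc.nontrivial_inter hd h2).exists_ne w
    have hsA := R.inter_nonempty_of_core_subset hc.1 hcAB hcA
      (fun y hyw hyA hyB ↦ hyw (hsep y ⟨hyA, hyB⟩)) hsc hsw
    have hsB := R.inter_nonempty_of_core_subset hd.1 (Set.union_comm A B ▸ hdAB) hdB
      (fun y hyw hyB hyA ↦ hyw (hsep y ⟨hyA, hyB⟩)) hsd hsw
    exact hsw (hsep s ⟨hsA, hsB⟩)
  obtain ⟨y, hy, -⟩ := hex u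
  obtain ⟨y', hy', hne⟩ := hex y
  exact ⟨y', hy', y, hy, hne⟩

variable {x z r : W} {q : T.Walk x z}

theorem nontrivial_setOf_getVert_mem (h2 : TwoConnected G) (hq : q.IsPath) {c : G.Walk u u}
    {d : G.Walk v v} (hc : IsLongestCycle G c) (hd : IsLongestCycle G d) {i j : ℕ} (hij : i < j)
    (hcore : ∀ t ∈ R.core c.toSubgraph, projIdx q t ≤ i ∨ j ≤ projIdx q t)
    (hcore' : ∀ t ∈ R.core d.toSubgraph, projIdx q t ≤ i ∨ j ≤ projIdx q t)
    (hi : ∃ t ∈ R.core c.toSubgraph, projIdx q t ≤ i)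
    (hj : ∃ t ∈ R.core d.toSubgraph, j ≤ projIdx q t) :
    {y | ∀ k ∈ Set.Icc i j, y ∈ R.bag (q.getVert k)}.Nontrivial := by
  refine (R.nontrivial_setOf_inter_nonempty h2 hc hd hcore hcore' hi hj).mono ?_
  rintro y ⟨⟨t, hty, hti⟩, t', hty', htj⟩ k ⟨hik, hkj⟩
  exact getVert_mem_of_connected R.isTree hq (R.subtree_connected y) hty hty'
    (le_trans hti hik) (le_trans hkj htj) (lt_of_le_of_lt hti (lt_of_lt_of_le hij htj))

end TreeRep

end Representations

section LocalArcs

variable {V W : Type} {G : SimpleGraph V} {T : SimpleGraph W} {a b s u v w w' : V} {r x z : W}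

theorem IsLongestCycle.length_add_two_le_of_isClique {c : G.Walk s s} (hc : IsLongestCycle G c)
    {p : G.Walk a b} {o : G.Walk b a} (h : IsArcPair c p o) {K : Set V} (hK : G.IsClique K)
    (ha : a ∈ K) (hb : b ∈ K) (hw : w ∈ K) (hw' : w' ∈ K) {p' : G.Walk w w'} (hp' : p'.IsPath)
    (hdisj : ∀ y ∈ p'.support, y ∉ c.support) : p'.length + 2 ≤ p.length := by
  have hap : a ∉ p'.support := fun hy ↦ hdisj a hy h.start_mem
  have hbp : b ∉ p'.support := fun hy ↦ hdisj b hy h.end_mem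
  have hadj : G.Adj a w := hK ha hw (ne_of_mem_of_not_mem p'.start_mem_support hap).symm
  have hadj' : G.Adj w' b := hK hw' hb (ne_of_mem_of_not_mem p'.end_mem_support hbp)
  have hpath : ((p'.cons hadj).concat hadj').IsPath :=
    (hp'.cons hap).concat (by simpa [h.ne.symm] using hbp) hadj'
  refine le_trans (by simp) (hc.length_le_of_isArcPair h hpath fun y hy hyo ↦ ?_)
  have hyp : y ∉ p'.support := fun hy ↦ hdisj y hy ((h.mem_support_iff y).2 (.inr hyo))
  simpa [Walk.support_concat, hyp] using hy

namespace TreeRep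

/-- The arc `p` of the cycle `c`, with complementary arc `o`, is local at index `k` of the path `q`:
its ends lie in the bag of the `k`-th vertex of `q`, and `p` is a single edge or the subtrees of its
interior vertices lie in one component of `X − V(q)`, where `X` is the subtree rooted at `x`. -/
structure IsLocalArc (R : TreeRep G T) (r : W) (q : T.Walk x z) (c : G.Walk s s) (k : ℕ)
    (p : G.Walk a b) (o : G.Walk b a) : Prop where
  isArcPair : IsArcPair c p o
  start_mem_bag : a ∈ R.bag (q.getVert k)
  end_mem_bag : b ∈ R.bag (q.getVert k)
  length_eq_one_or_subset : p.length = 1 ∨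
    ∃ X', IsCompOf T (rootedSubtree T r x \ {w | w ∈ q.support}) X' ∧
      ∀ y ∈ p.support, y ≠ a → y ≠ b → R.S y ⊆ X'

variable {R : TreeRep G T} {q : T.Walk x z} {c : G.Walk s s} {k : ℕ}

theorem IsLocalArc.eq_or_eq_of_mem_bag {p : G.Walk a b} {o : G.Walk b a}
    (h : R.IsLocalArc r q c k p o) {y : V} (hy : y ∈ p.support) (hyk : y ∈ R.bag (q.getVert k)) :
    y = a ∨ y = b := by
  rcases h.length_eq_one_or_subset with hlen | ⟨X', hX', hsub⟩
  · exact eq_or_eq_of_length_eq_one hlen hy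
  · by_contra! hne
    exact (hX'.2.1 (hsub y hy hne.1 hne.2 hyk)).2 (q.getVert_mem_support k)

theorem exists_isLocalArc_of_mem_edges (hc : c.IsCycle) (he : s(a, b) ∈ c.edges)
    (ha : a ∈ R.bag (q.getVert k)) (hb : b ∈ R.bag (q.getVert k)) :
    ∃ (a b : V) (p : G.Walk a b) (o : G.Walk b a), R.IsLocalArc r q c k p o := by
  obtain ⟨p, o, h, hlen⟩ := exists_isArcPair_length_eq_one hc he
  exact ⟨a, b, p, o, h, ha, hb, .inl hlen⟩

theorem start_mem_bag_of_interior_subset (hq : q.IsPath) {X' : Set W}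
    (hX' : IsCompOf T (rootedSubtree T r x \ {w | w ∈ q.support}) X') {t : W} (ht : t ∈ X')
    {p : G.Walk a b} (hp : p.IsPath) (hlen : 2 ≤ p.length) (ha : ¬ R.S a ⊆ X')
    (hsub : ∀ y ∈ p.support, y ≠ a → y ≠ b → R.S y ⊆ X') :
    a ∈ R.bag (q.getVert (projIdx q t)) := by
  obtain ⟨y, hy, hya, hyb, hadj⟩ := exists_adj_start_interior hp hlen
  obtain ⟨t', hta, hty⟩ := (R.adj_iff _ _ hadj.ne).1 hadj
  exact hX'.getVert_projIdx_mem R.isTree hq ht (R.subtree_connected a)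
    ⟨t', hta, hsub y hy hya hyb hty⟩ ha

theorem forall_ne_subset_or_exists_isLocalArc_of_mem_comp (hq : q.IsPath) (hc : c.IsCycle)
    {X' : Set W} (hX' : IsCompOf T (rootedSubtree T r x \ {w | w ∈ q.support}) X') {t : W}
    (ht : t ∈ R.core c.toSubgraph) (htX' : t ∈ X') :
    (∃ y₀, ∀ y ∈ c.support, y ≠ y₀ → R.S y ⊆ X') ∨
      ∃ (a b : V) (p : G.Walk a b) (o : G.Walk b a), R.IsLocalArc r q c (projIdx q t) p o := by
  by_cases hF : ∃ y ∈ c.support, y ∈ {y | R.S y ⊆ X'}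
  · rcases exists_arc_inside_or_forall_ne_mem hc hF with hall | ⟨a, b, p, o, h, ha, hb, hlen, hsub⟩
    · exact .inl hall
    · refine .inr ⟨a, b, p, o, h, ?_, ?_, .inr ⟨X', hX', hsub⟩⟩
      · exact start_mem_bag_of_interior_subset hq hX' htX' h.isPath_left hlen ha hsub
      · exact start_mem_bag_of_interior_subset hq hX' htX' h.isPath_left.reverse
          (by simpa using hlen) hb fun y hy hyb hya ↦ hsub y (by simpa using hy) hya hyb
  · push Not at hF
    obtain ⟨y, y', he, hty, hty'⟩ := R.mem_core_toSubgraph_iff.1 ht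
    have hmem (v : V) (hv : v ∈ c.support) (htv : t ∈ R.S v) :
        v ∈ R.bag (q.getVert (projIdx q t)) :=
      hX'.getVert_projIdx_mem R.isTree hq htX' (R.subtree_connected v) ⟨t, htv, htX'⟩ (hF v hv)
    exact .inr (exists_isLocalArc_of_mem_edges hc he
      (hmem y (c.fst_mem_support_of_mem_edges he) hty)
      (hmem y' (c.snd_mem_support_of_mem_edges he) hty'))

theorem forall_ne_subset_or_exists_isLocalArc (hq : q.IsPath) (hc : c.IsCycle) {t : W}
    (ht : t ∈ R.core c.toSubgraph) (htX : t ∈ rootedSubtree T r x) :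
    (∃ X', IsCompOf T (rootedSubtree T r x \ {w | w ∈ q.support}) X' ∧
        ∃ y₀, ∀ y ∈ c.support, y ≠ y₀ → R.S y ⊆ X') ∨
      ∃ (a b : V) (p : G.Walk a b) (o : G.Walk b a), R.IsLocalArc r q c (projIdx q t) p o := by
  by_cases htq : t ∈ q.support
  · obtain ⟨y, y', he, hty, hty'⟩ := R.mem_core_toSubgraph_iff.1 ht
    obtain ⟨k, rfl, hk⟩ := Walk.mem_support_iff_exists_getVert.1 htq
    rw [projIdx_getVert R.isTree hq hk]
    exact .inr (exists_isLocalArc_of_mem_edges hc he hty hty')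
  · obtain ⟨X', hX', htX'⟩ :=
      exists_isCompOf (T := T) (s := rootedSubtree T r x \ {w | w ∈ q.support}) ⟨htX, htq⟩
    exact (forall_ne_subset_or_exists_isLocalArc_of_mem_comp hq hc hX' ht htX').imp_left
      fun hall ↦ ⟨_, hX', hall⟩

/-- Otherwise the arc `p'` of `d` could be replaced by a detour through `w`, `p` and `w'`, which is
longer than `p` by at least two. -/
theorem IsLocalArc.exists_interior_mem_support {d : G.Walk v v} (hd : IsLongestCycle G d)
    {p : G.Walk a b} {o : G.Walk b a} (h : R.IsLocalArc r q c k p o) {k' : ℕ} {a' b' : V}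
    {p' : G.Walk a' b'} {o' : G.Walk b' a'} (h' : R.IsLocalArc r q d k' p' o')
    (hle : p'.length ≤ p.length) (hne : w ≠ w') (hw : w ∈ R.bag (q.getVert k))
    (hw' : w' ∈ R.bag (q.getVert k)) (hwk' : w ∈ R.bag (q.getVert k'))
    (hw'k' : w' ∈ R.bag (q.getVert k'))
    (hdisj : ∀ y ∈ ({a, b, w, w'} : Set V), y ∉ d.support) :
    ∃ y ∈ p.support, y ≠ a ∧ y ≠ b ∧ y ∈ d.support := by
  by_contra! hp
  obtain ⟨π, hπ, hlen, hsub⟩ := exists_isPath_between_of_isClique (R.isClique_bag _)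
    h.isArcPair.isPath_left h.start_mem_bag h.end_mem_bag (fun _ ↦ h.eq_or_eq_of_mem_bag) hw hw' hne
  have hπd : ∀ y ∈ π.support, y ∉ d.support := by
    intro y hy hyd
    have := hsub hy
    have hyA : y ∉ ({a, b, w, w'} : Set V) := fun hyA ↦ hdisj y hyA hyd
    simp only [Set.mem_insert_iff, Set.mem_singleton_iff, not_or] at hyA
    grind
  have := hd.length_add_two_le_of_isClique h'.isArcPair (R.isClique_bag _) h'.start_mem_bag
    h'.end_mem_bag hwk' hw'k' hπ hπd
  omega

theorem core_inter_nonempty_of_forall_ne_subset (h2 : TwoConnected G) {d : G.Walk v v}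
    (hc : IsLongestCycle G c) (hd : IsLongestCycle G d) {X' : Set W} {y₀ : V}
    (hX' : ∀ y ∈ c.support, y ≠ y₀ → R.S y ⊆ X') : (R.core d.toSubgraph ∩ X').Nonempty := by
  obtain ⟨y, ⟨hyc, hyd⟩, hne⟩ := (hc.nontrivial_inter hd h2).exists_ne y₀
  exact R.core_inter_nonempty_of_subset hd.1 hyd (hX' y hyc hne)

section Family

variable {ι : Type*} {base : ι → V} {C : ∀ i, G.Walk (base i) (base i)}

theorem exists_window_nontrivial (h2 : TwoConnected G) (hq : q.IsPath)
    (hqX : ∀ w ∈ q.support, w ∈ rootedSubtree T r x) (hC : ∀ i, IsLongestCycle G (C i))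
    (hcap : ∀ i, (R.core (C i).toSubgraph ∩ rootedSubtree T r x).Nonempty) :
    ∃ l n, (∀ i, ∃ t ∈ R.core (C i).toSubgraph ∩ rootedSubtree T r x,
        projIdx q t ∈ Set.Icc l n) ∧
      (l < n → {y | ∀ k ∈ Set.Icc l n, y ∈ R.bag (q.getVert k)}.Nontrivial) := by
  obtain ⟨l, n, hwin, hmin⟩ := exists_minimal_window
    (K := fun i ↦ projIdx q '' (R.core (C i).toSubgraph ∩ rootedSubtree T r x))
    (fun i ↦ (hcap i).image _) (m := q.length) (by
      rintro i _ ⟨t, -, rfl⟩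
      exact projIdx_le_length q t)
  have hwin' (i) : ∃ t ∈ R.core (C i).toSubgraph ∩ rootedSubtree T r x,
      projIdx q t ∈ Set.Icc l n := by
    obtain ⟨_, ⟨t, ht, rfl⟩, htl⟩ := hwin i
    exact ⟨t, ht, htl⟩
  refine ⟨l, n, hwin', fun hln ↦ ?_⟩
  obtain ⟨⟨i, hi⟩, j, hj⟩ := hmin hln
  have hcore {i} (hX : ∀ t ∈ R.core (C i).toSubgraph ∩ rootedSubtree T r x,
      projIdx q t ≤ l ∨ n ≤ projIdx q t) :
      ∀ t ∈ R.core (C i).toSubgraph, projIdx q t ≤ l ∨ n ≤ projIdx q t := by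
    intro t ht
    by_cases htX : t ∈ rootedSubtree T r x
    · exact hX t ⟨ht, htX⟩
    · exact .inl ((projIdx_eq_zero_of_notMem R.isTree hq hqX htX).trans_le l.zero_le)
  obtain ⟨t, ht, htln⟩ := hwin' i
  obtain ⟨t', ht', ht'ln⟩ := hwin' j
  exact R.nontrivial_setOf_getVert_mem h2 hq (hC i) (hC j) hln
    (hcore fun t ht ↦ (hi _ ⟨t, ht, rfl⟩).imp_right le_of_lt)
    (hcore fun t ht ↦ (hj _ ⟨t, ht, rfl⟩).imp_left le_of_lt)
    ⟨t, ht.1, (hi _ ⟨t, ht, rfl⟩).resolve_right htln.2.not_gt⟩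
    ⟨t', ht'.1, (hj _ ⟨t', ht', rfl⟩).resolve_left ht'ln.1.not_gt⟩

theorem exists_isLocalArc_forall_length_le [Nonempty ι] (hC : ∀ i, IsLongestCycle G (C i))
    {I : Set ℕ} (hloc : ∀ i, ∃ k ∈ I, ∃ (a b : V) (p : G.Walk a b) (o : G.Walk b a),
      R.IsLocalArc r q (C i) k p o) :
    ∃ i, ∃ k ∈ I, ∃ (a b : V) (p : G.Walk a b) (o : G.Walk b a), R.IsLocalArc r q (C i) k p o ∧
      ∀ i', ∀ k' ∈ I, ∀ (a' b' : V) (p' : G.Walk a' b') (o' : G.Walk b' a'),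
        R.IsLocalArc r q (C i') k' p' o' → p'.length ≤ p.length := by
  let L : Set ℕ := {m | ∃ i, ∃ k ∈ I, ∃ (a b : V) (p : G.Walk a b) (o : G.Walk b a),
    R.IsLocalArc r q (C i) k p o ∧ p.length = m}
  have hL : L.Nonempty := by
    obtain ⟨k, hk, a, b, p, o, h⟩ := hloc (Classical.arbitrary ι)
    exact ⟨_, _, k, hk, a, b, p, o, h, rfl⟩
  have hbdd : BddAbove L := by
    refine ⟨(C (Classical.arbitrary ι)).length, ?_⟩
    rintro _ ⟨i, k, -, a, b, p, o, h, rfl⟩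
    rw [(hC _).length_eq (hC i), ← h.isArcPair.length_add]
    exact Nat.le_add_right _ _
  obtain ⟨_, ⟨i, k, hk, a, b, p, o, h, rfl⟩, hmax⟩ := hbdd.exists_isGreatest_of_nonempty hL
  exact ⟨i, k, hk, a, b, p, o, h, fun i' k' hk' a' b' p' o' h' ↦
    hmax ⟨i', k', hk', a', b', p', o', h', rfl⟩⟩

theorem exists_transversal_of_isLocalArc [Nonempty ι] (hC : ∀ i, IsLongestCycle G (C i))
    {I : Set ℕ} (hI : {y | ∀ k ∈ I, y ∈ R.bag (q.getVert k)}.Nontrivial)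
    (hloc : ∀ i, ∃ k ∈ I, ∃ (a b : V) (p : G.Walk a b) (o : G.Walk b a),
      R.IsLocalArc r q (C i) k p o) :
    ∃ A : Set V, A.Finite ∧ A.ncard ≤ 4 ∧ ((∀ i, ∃ v ∈ A, v ∈ (C i).support) ∨
      ∃ X', IsCompOf T (rootedSubtree T r x \ {w | w ∈ q.support}) X' ∧
        ∀ i, (∀ v ∈ A, v ∉ (C i).support) → (R.core (C i).toSubgraph ∩ X').Nonempty) := by
  classical
  obtain ⟨w, hw, w', hw', hne⟩ := hI
  obtain ⟨i₀, k, hk, a, b, p, o, h, hmax⟩ := exists_isLocalArc_forall_length_le hC hloc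
  have hmeet (i) (hi : ∀ v ∈ ({a, b, w, w'} : Set V), v ∉ (C i).support) :
      ∃ y ∈ p.support, y ≠ a ∧ y ≠ b ∧ y ∈ (C i).support := by
    obtain ⟨k', hk', a', b', p', o', h'⟩ := hloc i
    exact h.exists_interior_mem_support (hC i) h' (hmax i k' hk' _ _ _ _ h') hne (hw k hk)
      (hw' k hk) (hw k' hk') (hw' k' hk') hi
  refine ⟨{a, b, w, w'}, Set.toFinite _, ?_, h.length_eq_one_or_subset.imp ?_ ?_⟩
  · simpa [← Set.ncard_coe_finset] using Finset.card_le_four (a := a) (b := b) (c := w) (d := w')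
  · intro hlen i
    by_contra! hi
    obtain ⟨y, hy, hya, hyb, -⟩ := hmeet i hi
    exact (eq_or_eq_of_length_eq_one hlen hy).elim hya hyb
  · rintro ⟨X', hX', hsub⟩
    refine ⟨X', hX', fun i hi ↦ ?_⟩
    obtain ⟨y, hy, hya, hyb, hyi⟩ := hmeet i hi
    exact R.core_inter_nonempty_of_subset (hC i).1 hyi (hsub y hy hya hyb)

end Family

end TreeRep

end LocalArcs

theorem cycle_trans_general {V W : Type} {G : SimpleGraph V} {T : SimpleGraph W}
    (h2 : TwoConnected G) (R : TreeRep G T) (r : W) {x z : W} {q : T.Walk x z} (hq : q.IsPath)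
    (hqX : ∀ w ∈ q.support, w ∈ rootedSubtree T r x) {ι : Type*} {a : ι → V}
    {C : ∀ i, G.Walk (a i) (a i)} (hC : ∀ i, IsLongestCycle G (C i))
    (hcap : ∀ i, (R.core (C i).toSubgraph ∩ rootedSubtree T r x).Nonempty) :
    ∃ A : Set V, A.Finite ∧ A.ncard ≤ 4 ∧ ((∀ i, ∃ v ∈ A, v ∈ (C i).support) ∨
      ∃ X', IsCompOf T (rootedSubtree T r x \ {w | w ∈ q.support}) X' ∧
        ∀ i, (∀ v ∈ A, v ∉ (C i).support) → (R.core (C i).toSubgraph ∩ X').Nonempty) := by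
  cases isEmpty_or_nonempty ι
  · exact ⟨∅, Set.finite_empty, by simp, .inl isEmptyElim⟩
  by_cases hX' : ∃ i X', IsCompOf T (rootedSubtree T r x \ {w | w ∈ q.support}) X' ∧
      ∃ y₀, ∀ y ∈ (C i).support, y ≠ y₀ → R.S y ⊆ X'
  · obtain ⟨i, X', hX', y₀, hi⟩ := hX'
    exact ⟨∅, Set.finite_empty, by simp, .inr ⟨X', hX', fun j _ ↦
      TreeRep.core_inter_nonempty_of_forall_ne_subset h2 (hC i) (hC j) hi⟩⟩
  obtain ⟨l, n, hwin, hln⟩ := TreeRep.exists_window_nontrivial h2 hq hqX hC hcap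
  have hloc (i) : ∃ k ∈ Set.Icc l n, ∃ (a b : V) (p : G.Walk a b) (o : G.Walk b a),
      R.IsLocalArc r q (C i) k p o := by
    obtain ⟨t, ⟨ht, htX⟩, htln⟩ := hwin i
    exact ⟨_, htln, (TreeRep.forall_ne_subset_or_exists_isLocalArc hq (hC i).1 ht htX).resolve_left
      fun h ↦ hX' ⟨i, h⟩⟩
  refine TreeRep.exists_transversal_of_isLocalArc hC ?_ hloc
  rcases lt_or_ge l n with hlt | hge
  · exact hln hlt
  · obtain ⟨k, hk, a, b, p, o, h⟩ := hloc (Classical.arbitrary ι)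
    have heq {k'} (hk' : k' ∈ Set.Icc l n) : k' = k := by grind
    exact ⟨a, fun k' hk' ↦ heq hk' ▸ h.start_mem_bag, b, fun k' hk' ↦ heq hk' ▸ h.end_mem_bag,
      h.isArcPair.ne⟩

/-- For a 2-connected chordal `G` with minimal rooted tree representation,
a subtree `X` rooted at `x`, the `x`–`z` path `Q = q` in `X`, and a family `𝒞 = C` of
longest cycles for which `X` has the core capture property, there is `A ⊆ V(G)` with
`|A| ≤ 4` such that the cycles of `𝒞` disjoint from `A` either form an empty family, or
some component `X'` of `X − V(Q)` has the core capture property for them. -/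
theorem cycle_trans {V W : Type} [Fintype V] [Fintype W] (G : SimpleGraph V)
    (T : SimpleGraph W) (hchordal : IsChordal G) (h2 : TwoConnected G)
    (R : TreeRep G T) (hmin : R.IsMinimal) (r : W)
    (x z : W) (hz : z ∈ rootedSubtree T r x)
    (q : T.Walk x z) (hq : q.IsPath) (hqX : ∀ w ∈ q.support, w ∈ rootedSubtree T r x)
    {ι : Type} (a : ι → V) (C : ∀ i : ι, G.Walk (a i) (a i))
    (hC : ∀ i : ι, IsLongestCycle G (C i))
    (hcap : ∀ i : ι, (R.core (C i).toSubgraph ∩ rootedSubtree T r x).Nonempty) :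
    ∃ A : Set V, A.Finite ∧ A.ncard ≤ 4 ∧
      ((∀ i : ι, ∃ v ∈ A, v ∈ (C i).support) ∨
        ∃ X' : Set W, IsCompOf T (rootedSubtree T r x \ {w : W | w ∈ q.support}) X' ∧
          ∀ i : ι, (∀ v ∈ A, v ∉ (C i).support) →
            (R.core (C i).toSubgraph ∩ X').Nonempty) :=
  cycle_trans_general h2 R r hq hqX hC hcap
end

section
/- If T is an n-vertex tree with root r, then ccg(T) ≤ ccg(T, r) ≤ 1 + ⌊log₂ n⌋. -/
open SimpleGraph

/-!
In any graph, a connected set `X` with at most `2 * k + 1` vertices contains a path from any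
prescribed `x ∈ X` whose deletion leaves only components with at most `k` vertices. Indeed `X \ {x}`
has at most `2 * k` vertices, so at most one of its components `C` has more than `k`; the path steps
from `x` to a neighbour in `C` and continues inside `C` by induction. Taking `k = 2 ^ t - 1`, Cutter
gets from fewer than `2 ^ (t + 1)` vertices to fewer than `2 ^ t` in a single round.
-/

theorem ncard_add_ncard_lt_of_subset_sdiff_singleton {α : Type*} {X C D : Set α} {x : α}
    (hfin : X.Finite) (hx : x ∈ X) (hC : C ⊆ X \ {x}) (hD : D ⊆ X \ {x}) (hCD : Disjoint C D) :
    C.ncard + D.ncard < X.ncard := calc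
  C.ncard + D.ncard = (C ∪ D).ncard :=
    (Set.ncard_union_eq hCD (hfin.sdiff.subset hC) (hfin.sdiff.subset hD)).symm
  _ ≤ (X \ {x}).ncard := Set.ncard_le_ncard (Set.union_subset hC hD) hfin.sdiff
  _ < X.ncard := Set.ncard_sdiff_singleton_lt_of_mem hx hfin

theorem subset_of_induce_preconnected_of_adj_closed {V : Type*} {G : SimpleGraph V} {A C : Set V}
    (hA : (G.induce A).Preconnected) (hAC : (A ∩ C).Nonempty)
    (hclosed : ∀ ⦃u v : V⦄, u ∈ C → v ∈ A → G.Adj u v → v ∈ C) : A ⊆ C := by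
  intro b hb
  obtain ⟨a, haA, haC⟩ := hAC
  obtain ⟨p⟩ := hA ⟨a, haA⟩ ⟨b, hb⟩
  by_contra hbC
  obtain ⟨d, -, hfst, hsnd⟩ := p.exists_boundary_dart (Subtype.val ⁻¹' C) haC hbC
  exact hsnd (hclosed hfst d.snd.2 d.adj)

section

variable {V : Type} {G : SimpleGraph V} {s t C D X : Set V} {x : V}

namespace IsCompOf

theorem subset (hC : IsCompOf G s C) : C ⊆ s := hC.2.1

theorem connected (hC : IsCompOf G s C) : (G.induce C).Connected := hC.2.2.1

theorem mem_of_adj (hC : IsCompOf G s C) {a b : V} (ha : a ∈ C) (hb : b ∈ s) (hab : G.Adj a b) :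
    b ∈ C :=
  hC.2.2.2 ha hb hab

theorem anti (hC : IsCompOf G s C) (hCt : C ⊆ t) (hts : t ⊆ s) : IsCompOf G t C :=
  ⟨hC.1, hCt, hC.connected, fun _ _ ha hb => hC.mem_of_adj ha (hts hb)⟩

theorem subset_of_inter_nonempty (hC : IsCompOf G s C) (hD : (G.induce D).Preconnected)
    (hDs : D ⊆ s) (hDC : (D ∩ C).Nonempty) : D ⊆ C :=
  subset_of_induce_preconnected_of_adj_closed hD hDC fun _ _ hu hv => hC.mem_of_adj hu (hDs hv)

theorem exists_adj_of_sdiff_singleton (hC : IsCompOf G (X \ {x}) C)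
    (hX : (G.induce X).Preconnected) (hx : x ∈ X) : ∃ c ∈ C, G.Adj x c := by
  obtain ⟨a, ha⟩ := hC.1
  by_contra! hno
  have hXC : X ⊆ C := by
    refine subset_of_induce_preconnected_of_adj_closed hX ⟨a, (hC.subset ha).1, ha⟩ ?_
    intro u v hu hv huv
    refine hC.mem_of_adj hu ⟨hv, ?_⟩ huv
    rintro rfl
    exact hno u hu huv.symm
  exact (hC.subset (hXC hx)).2 rfl

theorem of_sdiff_support_cons {c z : V} {hxc : G.Adj x c} {p : G.Walk c z}
    (hD : IsCompOf G (X \ {w | w ∈ (p.cons hxc).support}) D) (hDC : D ⊆ C) (hC : C ⊆ X \ {x}) :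
    IsCompOf G (C \ {w | w ∈ p.support}) D := by
  refine hD.anti (fun w hw => ⟨hDC hw, fun h => (hD.subset hw).2 (List.mem_cons_of_mem _ h)⟩) ?_
  rintro w ⟨hw, hwp⟩
  exact ⟨(hC hw).1, List.not_mem_cons_of_ne_of_not_mem (hC hw).2 hwp⟩

end IsCompOf

theorem exists_isPath_forall_isCompOf_ncard_le (hfin : X.Finite) (hX : (G.induce X).Connected)
    (hx : x ∈ X) {k : ℕ} (hk : X.ncard ≤ 2 * k + 1) :
    ∃ (z : V) (p : G.Walk x z), p.IsPath ∧ (∀ w ∈ p.support, w ∈ X) ∧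
      ∀ C, IsCompOf G (X \ {w | w ∈ p.support}) C → C.ncard ≤ k := by
  induction hn : X.ncard using Nat.strong_induction_on generalizing X x with
  | _ n ih =>
  by_cases hsmall : ∀ C, IsCompOf G (X \ {x}) C → C.ncard ≤ k
  · exact ⟨x, .nil, .nil, by simpa using hx, by simpa using hsmall⟩
  push Not at hsmall
  obtain ⟨C, hC, hCk⟩ := hsmall
  obtain ⟨c, hc, hxc⟩ := hC.exists_adj_of_sdiff_singleton hX.preconnected hx
  have hCX : C ⊆ X := hC.subset.trans Set.sdiff_subset
  have hxC : x ∉ C := fun h => (hC.subset h).2 rfl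
  have hCn : C.ncard < X.ncard := Set.ncard_lt_ncard ⟨hCX, fun h => hxC (h hx)⟩ hfin
  obtain ⟨z, p, hp, hpC, hpk⟩ :=
    ih _ (hn ▸ hCn) (hfin.subset hCX) hC.connected hc (hCn.le.trans hk) rfl
  refine ⟨z, .cons hxc p, hp.cons fun h => hxC (hpC x h), ?_, fun D hD => ?_⟩
  · simpa [hx] using fun w hw => hCX (hpC w hw)
  have hDX : D ⊆ X \ {x} := hD.subset.trans (Set.sdiff_subset_sdiff_right (by simp))
  rcases (D ∩ C).eq_empty_or_nonempty with hdisj | hmeet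
  · have hcard : D.ncard + C.ncard < X.ncard :=
      ncard_add_ncard_lt_of_subset_sdiff_singleton hfin hx hDX hC.subset
        (Set.disjoint_iff_inter_eq_empty.2 hdisj)
    omega
  · have hDC : D ⊆ C := hC.subset_of_inter_nonempty hD.connected.preconnected hDX hmeet
    exact hpk D (hD.of_sdiff_support_cons hDC hC.subset)

theorem cutterWins_of_ncard_lt_two_pow (hfin : X.Finite) (hX : (G.induce X).Connected)
    (hx : x ∈ X) {n : ℕ} (hn : X.ncard < 2 ^ n) : cutterWins G n X x := by
  induction n generalizing X x with
  | zero =>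
    have hpos : 0 < X.ncard := (Set.ncard_pos hfin).2 ⟨x, hx⟩
    omega
  | succ n ih =>
    obtain ⟨z, p, hp, hpX, hhalf⟩ :=
      exists_isPath_forall_isCompOf_ncard_le hfin hX hx (k := 2 ^ n - 1) (by omega)
    refine ⟨z, hpX z p.end_mem_support, p, hp, hpX, .inr fun C c hC hc _ => ?_⟩
    have hCn : C.ncard < 2 ^ n := (hhalf C hC).trans_lt (Nat.sub_one_lt (by positivity))
    exact ih (hfin.sdiff.subset hC.subset) hC.connected hc hCn

theorem ccgOn_le_one_add_log_ncard (hfin : X.Finite) (hX : (G.induce X).Connected) (hx : x ∈ X) :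
    ccgOn G X x ≤ 1 + Nat.log 2 X.ncard := by
  refine Nat.sInf_le (cutterWins_of_ncard_lt_two_pow hfin hX hx ?_)
  rw [add_comm]
  exact Nat.lt_pow_succ_log_self one_lt_two _

theorem ccg_le_ccgOn_univ (G : SimpleGraph V) (r : V) : ccg G ≤ ccgOn G Set.univ r :=
  Nat.sInf_le ⟨r, rfl⟩

end

theorem ccg_le_log_general {V : Type} [Fintype V] (G : SimpleGraph V) (hG : G.Connected) (r : V) :
    ccg G ≤ ccgOn G Set.univ r ∧
      ccgOn G Set.univ r ≤ 1 + Nat.log 2 (Fintype.card V) := by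
  have huniv : (G.induce Set.univ).Connected := (induceUnivIso G).connected_iff.2 hG
  refine ⟨ccg_le_ccgOn_univ G r, ?_⟩
  simpa using ccgOn_le_one_add_log_ncard Set.finite_univ huniv (Set.mem_univ r)

/-- If `T` is an `n`-vertex tree with root `r`, then
`ccg(T) ≤ ccg(T, r) ≤ 1 + ⌊log₂ n⌋`. -/
theorem ccg_le_log {W : Type} [Fintype W] (T : SimpleGraph W) (hT : T.IsTree) (r : W) :
    ccg T ≤ ccgOn T Set.univ r ∧
      ccgOn T Set.univ r ≤ 1 + Nat.log 2 (Fintype.card W) := by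
  exact ccg_le_log_general T hT.connected r
end
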